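/- arXiv:1812.09753 — 5 statements merged into one kernel-verified Lean document; each statement's English description precedes it below -/
import Mathlib

section
/- Let n ≥ 2 and D > 0. If X ⊆ 𝔹^n is a Borel measurable set with hyperbolic diameter diam_H X ≤ D and μ_H(X) = μ_H({x ∈ ℝ^n : ‖x‖ ≤ tanh(D/2)}), then there exists z ∈ 𝔹^n such that the closure of X in ℝ^n equals the hyperbolic closed ball {y ∈ 𝔹^n : d_H(y,z) ≤ D/2}. -/
/-!
Write `C = cosh D`. A compact subset of the Klein model is *admissible* if its hyperbolic diameter
is at most `D`, and *extremal* if it is admissible of largest, positive volume. Extremal sets exist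
by compactness; once every extremal set is known to be a ball of radius `D / 2`, all these balls are
extremal, and hence so is the closure of `X`.

Geodesics of the Klein model are Euclidean segments and hyperbolic balls are convex, so taking
convex hulls preserves the diameter. An extremal set `K` is therefore convex and contains every
point within distance `D` of all its points; in particular every frontier point `x` of `K` has an
*opposite* point in `K`, at distance `D` from `x`.

The symmetry comes from two-point symmetrization (polarization) in hyperbolic reflections. These are
induced by Lorentz reflections of the hyperboloid and preserve the volume, since the volume of `A`
is proportional to the Lebesgue measure of the part below the hyperboloid of the cone over `A`.
Polarization preserves the volume and does not increase the diameter, so it maps extremal sets to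
extremal sets. The existence of opposite points in polarizations of `K` shows that for two frontier
points `x`, `p` the reflection exchanging them maps some opposite point of `x` to an opposite point
of `p`.

A frontier point `p` closest to a given interior point has a unique opposite point `q`. Hence, for
every other frontier point `r`, the reflection exchanging `p` and `r` maps `q` to an opposite point
of `r`. This choice of opposite points is continuous, which forces them to be unique. Then the
reflections exchanging `r` with `p` and with `q` yield the same opposite point of `r`, which gives
`cosh d(r, p) + cosh d(r, q) = C + 1`: the frontier of `K` lies on the sphere of radius `D / 2`
about the midpoint of `p` and `q`, and `K` is the ball.
-/

open MeasureTheory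

noncomputable section

/-- Euclidean space `ℝ^n`. -/
abbrev Fsp (n : ℕ) : Type := EuclideanSpace ℝ (Fin n)

/-- The inverse hyperbolic cosine `arcosh x = log (x + √(x² − 1))`. -/
def arcosh (x : ℝ) : ℝ := Real.log (x + Real.sqrt (x ^ 2 - 1))

/-- Hyperbolic distance in the Klein model on the open unit ball of `ℝ^n`:
`d_H(x,y) = arcosh ((1 − ⟨x,y⟩)/√((1 − ‖x‖²)(1 − ‖y‖²)))`. -/
def hypDist {n : ℕ} (x y : Fsp n) : ℝ :=
  arcosh ((1 - inner (𝕜 := ℝ) x y) / Real.sqrt ((1 - ‖x‖ ^ 2) * (1 - ‖y‖ ^ 2)))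

/-- Hyperbolic volume in the Klein model: density `(1 − ‖x‖²)^{−(n+1)/2}`
with respect to Lebesgue measure. -/
def hypVol (n : ℕ) : Measure (Fsp n) :=
  (volume : Measure (Fsp n)).withDensity fun x =>
    ENNReal.ofReal ((1 - ‖x‖ ^ 2) ^ (-(((n : ℝ) + 1) / 2)))

open scoped Topology

/-! ### Linear algebra and measure theory -/

section BilinReflection

variable {K V : Type*} [Field K] [AddCommGroup V] [Module K V] (B : LinearMap.BilinForm K V) (e : V)

/-- The reflection in the orthogonal complement of `e` with respect to a symmetric bilinear form.
It is the identity if `e` is isotropic, since then `2 / B e e = 0`. -/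
def bilinReflection : Module.End K V := Module.preReflection e ((2 / B e e) • B e)

lemma bilinReflection_apply (v : V) :
    bilinReflection B e v = v - (2 / B e e * B e v) • e := by
  rw [bilinReflection, Module.preReflection_apply, LinearMap.smul_apply, smul_eq_mul]

lemma involutive_bilinReflection : Function.Involutive (bilinReflection B e) := by
  by_cases he : B e e = 0
  · intro v
    simp [bilinReflection_apply, he]
  · exact Module.involutive_preReflection (by simp [he])

variable {B} in
lemma apply_bilinReflection (hB : B.IsSymm) (u v : V) :
    B u (bilinReflection B e v) = B (bilinReflection B e u) v := by
  simp only [bilinReflection_apply, map_sub, map_smul, LinearMap.sub_apply, LinearMap.smul_apply,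
    smul_eq_mul]
  rw [hB.eq e u]
  ring

end BilinReflection

lemma abs_det_of_involutive {V : Type*} [AddCommGroup V] [Module ℝ V] {f : V →ₗ[ℝ] V}
    (hf : Function.Involutive f) : |LinearMap.det f| = 1 := by
  have hdet := congrArg LinearMap.det (show f ∘ₗ f = LinearMap.id from LinearMap.ext hf)
  rw [LinearMap.det_comp, LinearMap.det_id, mul_self_eq_one_iff] at hdet
  rcases hdet with h | h <;> simp [h]

lemma convex_subset_closure_interior {E : Type*} [NormedAddCommGroup E]
    [NormedSpace ℝ E] [FiniteDimensional ℝ E] [MeasurableSpace E] [BorelSpace E] (μ : Measure E)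
    [μ.IsAddHaarMeasure] {A : Set E} (hA : Convex ℝ A) (hμ : μ A ≠ 0) :
    A ⊆ closure (interior A) := by
  rcases (interior A).eq_empty_or_nonempty with hempty | hne
  · have hA' : A ⊆ frontier A := by simpa [frontier, hempty] using subset_closure
    exact absurd (measure_mono_null hA' (hA.addHaar_frontier μ)) hμ
  · rw [hA.closure_interior_eq_closure_of_nonempty_interior hne]
    exact subset_closure

lemma upperSemicontinuous_measure_compacts {α : Type*} [TopologicalSpace α] [MeasurableSpace α]
    (μ : Measure α) [μ.OuterRegular] :
    UpperSemicontinuous fun K : TopologicalSpace.Compacts α => μ (K : Set α) := by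
  intro K v hv
  obtain ⟨U, hKU, hU, hUv⟩ := Set.exists_isOpen_lt_of_lt (K : Set α) v hv
  filter_upwards [(TopologicalSpace.Compacts.isOpen_subsets_of_isOpen hU).mem_nhds hKU] with L hL
  exact (measure_mono hL).trans_lt hUv

section Polarization

variable {α : Type*}

/-- The two-point symmetrization of `K` towards `S`. Here `ρ` is an involution mapping the
complement of `S` into `S`; of each pair `x ∈ S`, `ρ x ∉ S` meeting `K` in one point, the
polarization keeps `x`. -/
def polarization (ρ : α → α) (S K : Set α) : Set α := (K ∩ ρ ⁻¹' K) ∪ ((K ∪ ρ ⁻¹' K) ∩ S)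

lemma measure_le_polarization [MeasurableSpace α] {ν : Measure α} {ρ : α → α} {S K : Set α}
    (hρ : MeasurePreserving ρ ν ν) (hinv : Function.Involutive ρ) (hS : ∀ x ∉ S, ρ x ∈ S)
    (hSm : MeasurableSet S) (hK : MeasurableSet K) : ν K ≤ ν (polarization ρ S K) := by
  -- `M` is the part of `K` that polarization moves.
  set M : Set α := (K \ ρ ⁻¹' K) \ S
  have hMm : MeasurableSet M := (hK.diff (hρ.measurable hK)).diff hSm
  have hMK : M ⊆ K := Set.sdiff_subset.trans Set.sdiff_subset
  have hdisjoint : Disjoint (K \ M) (ρ ⁻¹' M) := by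
    rw [Set.disjoint_left]
    rintro x ⟨hx, -⟩ hρx
    exact hρx.1.2 (Set.mem_preimage.2 ((hinv x).symm ▸ hx))
  have hsubset : K \ M ∪ ρ ⁻¹' M ⊆ polarization ρ S K := by
    rintro x (⟨hx, hxM⟩ | hx)
    · by_cases hxS : x ∈ S
      · exact .inr ⟨.inl hx, hxS⟩
      · exact .inl ⟨hx, by_contra fun h => hxM ⟨⟨hx, h⟩, hxS⟩⟩
    · exact .inr ⟨.inr (hMK hx), hinv x ▸ hS (ρ x) hx.2⟩
  calc ν K = ν (K \ M ∪ M) := by rw [Set.sdiff_union_of_subset hMK]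
    _ ≤ ν (K \ M) + ν M := measure_union_le _ _
    _ = ν (K \ M) + ν (ρ ⁻¹' M) := by rw [hρ.measure_preimage hMm.nullMeasurableSet]
    _ = ν (K \ M ∪ ρ ⁻¹' M) := (measure_union hdisjoint (hρ.measurable hMm)).symm
    _ ≤ ν (polarization ρ S K) := measure_mono hsubset

end Polarization

/-! ### Minkowski space -/

section Minkowski

variable {E : Type*} [NormedAddCommGroup E] [InnerProductSpace ℝ E]

/-- The Lorentz form on `ℝ × E`; the first coordinate is the time direction. -/
def minkowski : LinearMap.BilinForm ℝ (ℝ × E) :=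
  (LinearMap.mul ℝ ℝ).compl₁₂ (LinearMap.fst ℝ ℝ E) (LinearMap.fst ℝ ℝ E) -
    (innerₗ E).compl₁₂ (LinearMap.snd ℝ ℝ E) (LinearMap.snd ℝ ℝ E)

local notation "⟪" u "," v "⟫ₘ" => minkowski u v

lemma minkowski_apply (u v : ℝ × E) : ⟪u, v⟫ₘ = u.1 * v.1 - inner ℝ u.2 v.2 := rfl

lemma minkowski_comm (u v : ℝ × E) : ⟪u, v⟫ₘ = ⟪v, u⟫ₘ := by
  rw [minkowski_apply, minkowski_apply, mul_comm, real_inner_comm]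

lemma minkowski_self (v : ℝ × E) : ⟪v, v⟫ₘ = v.1 ^ 2 - ‖v.2‖ ^ 2 := by
  rw [minkowski_apply, real_inner_self_eq_norm_sq, sq v.1]

lemma isSymm_minkowski : (minkowski (E := E)).IsSymm := ⟨minkowski_comm⟩

@[fun_prop]
lemma continuous_minkowski {α : Type*} [TopologicalSpace α] {f g : α → ℝ × E}
    (hf : Continuous f) (hg : Continuous g) : Continuous fun x => ⟪f x, g x⟫ₘ := by
  simp only [minkowski_apply]
  fun_prop

variable (E) in
/-- The cone of vectors of `ℝ × E` that are timelike and future-directed. -/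
def futureCone : ConvexCone ℝ (ℝ × E) where
  carrier := {v | ‖v.2‖ < v.1}
  smul_mem' c hc v hv := by
    simpa [norm_smul, abs_of_pos hc] using mul_lt_mul_of_pos_left hv hc
  add_mem' u hu v hv := (norm_add_le _ _).trans_lt (add_lt_add hu hv)

lemma mem_futureCone {v : ℝ × E} : v ∈ futureCone E ↔ ‖v.2‖ < v.1 := Iff.rfl

lemma isOpen_futureCone : IsOpen (futureCone E : Set (ℝ × E)) :=
  isOpen_lt continuous_snd.norm continuous_fst

lemma minkowski_pos {u v : ℝ × E} (hu : u ∈ futureCone E) (hv : v ∈ futureCone E) :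
    0 < ⟪u, v⟫ₘ := by
  have hinner : inner ℝ u.2 v.2 ≤ ‖u.2‖ * ‖v.2‖ := real_inner_le_norm _ _
  have hnorm : ‖u.2‖ * ‖v.2‖ < u.1 * v.1 :=
    mul_lt_mul'' hu hv (norm_nonneg _) (norm_nonneg _)
  rw [minkowski_apply]
  linarith

lemma mem_futureCone_of_minkowski_pos {u v : ℝ × E} (hu : u ∈ futureCone E)
    (hv : 0 < ⟪v, v⟫ₘ) (huv : 0 < ⟪u, v⟫ₘ) : v ∈ futureCone E := by
  rw [minkowski_self, sub_pos, sq_lt_sq, abs_norm] at hv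
  rcases lt_abs.1 hv with h | h
  · exact h
  · have hneg : -v ∈ futureCone E := by simpa [mem_futureCone] using h
    have := minkowski_pos hu hneg
    rw [map_neg] at this
    linarith

lemma eq_zero_of_minkowski_eq_zero {u w : ℝ × E} (hu : u ∈ futureCone E)
    (huw : ⟪u, w⟫ₘ = 0) (hw : 0 ≤ ⟪w, w⟫ₘ) : w = 0 := by
  have hw' : ‖w.2‖ ≤ |w.1| := by
    rwa [minkowski_self, sub_nonneg, sq_le_sq, abs_norm] at hw
  have hprod : u.1 * |w.1| ≤ ‖u.2‖ * |w.1| := by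
    have h : u.1 * w.1 = inner ℝ u.2 w.2 := sub_eq_zero.1 huw
    calc u.1 * |w.1| = |u.1 * w.1| := by
          rw [abs_mul, abs_of_pos ((norm_nonneg _).trans_lt hu)]
      _ ≤ ‖u.2‖ * ‖w.2‖ := h ▸ abs_real_inner_le_norm _ _
      _ ≤ ‖u.2‖ * |w.1| := by gcongr
  have hw₁ : |w.1| ≤ 0 := by
    by_contra! hpos
    exact absurd (le_of_mul_le_mul_right hprod hpos) (not_le.2 hu)
  exact Prod.ext (abs_nonpos_iff.1 hw₁) (norm_le_zero_iff.1 (hw'.trans hw₁))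

end Minkowski

/-! ### The Klein model and the hyperboloid -/

/-- The open unit ball of `E`, the set of points of the Klein model. -/
abbrev KleinBall (E : Type*) [NormedAddCommGroup E] : Type _ := Metric.ball (0 : E) 1

namespace KleinBall

variable {E : Type*} [NormedAddCommGroup E]

lemma norm_lt_one (x : KleinBall E) : ‖(x : E)‖ < 1 := mem_ball_zero_iff.1 x.2

lemma isOpenEmbedding_coe : Topology.IsOpenEmbedding ((↑) : KleinBall E → E) :=
  Metric.isOpen_ball.isOpenEmbedding_subtypeVal

variable (E) in
/-- The centre of the unit ball. -/
def origin : KleinBall E := ⟨0, Metric.mem_ball_self one_pos⟩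

/-- `√(1 - ‖x‖²)`, the inverse of the height of the point of the hyperboloid above `x`. -/
def factor (x : KleinBall E) : ℝ := √(1 - ‖(x : E)‖ ^ 2)

lemma one_sub_norm_sq_pos (x : KleinBall E) : 0 < 1 - ‖(x : E)‖ ^ 2 :=
  sub_pos.2 (pow_lt_one₀ (norm_nonneg _) x.norm_lt_one two_ne_zero)

lemma factor_pos (x : KleinBall E) : 0 < factor x := Real.sqrt_pos.2 x.one_sub_norm_sq_pos

lemma factor_sq (x : KleinBall E) : factor x ^ 2 = 1 - ‖(x : E)‖ ^ 2 :=
  Real.sq_sqrt x.one_sub_norm_sq_pos.le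

@[fun_prop]
lemma continuous_factor : Continuous (factor : KleinBall E → ℝ) := by
  unfold factor
  fun_prop

variable [InnerProductSpace ℝ E]

local notation "⟪" u "," v "⟫ₘ" => minkowski u v

/-- The point of the hyperboloid `⟪v, v⟫ₘ = 1` above `x`. -/
def lift (x : KleinBall E) : ℝ × E := (factor x)⁻¹ • (1, (x : E))

/-- The hyperbolic cosine of the distance in the Klein model. -/
def coshDist (x y : KleinBall E) : ℝ := (1 - inner ℝ (x : E) y) / (factor x * factor y)

/-- Central projection of the future cone to the unit ball, the inverse of `lift` up to scaling.
Vectors outside the future cone are sent to the origin. -/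
def proj (v : ℝ × E) : KleinBall E :=
  open Classical in
  if h : v ∈ futureCone E then
    ⟨v.1⁻¹ • v.2, by
      have hpos : 0 < v.1 := (norm_nonneg _).trans_lt h
      rwa [mem_ball_zero_iff, norm_smul, norm_inv, Real.norm_of_nonneg hpos.le,
        inv_mul_lt_one₀ hpos]⟩
  else origin E

lemma factor_smul_lift (x : KleinBall E) : factor x • lift x = (1, (x : E)) :=
  smul_inv_smul₀ x.factor_pos.ne' _

lemma lift_mem_futureCone (x : KleinBall E) : lift x ∈ futureCone E :=
  (futureCone E).smul_mem (inv_pos.2 x.factor_pos) x.norm_lt_one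

@[fun_prop]
lemma continuous_lift : Continuous (lift : KleinBall E → ℝ × E) :=
  (continuous_factor.inv₀ fun x => x.factor_pos.ne').smul (by fun_prop)

lemma minkowski_lift (x y : KleinBall E) : ⟪lift x, lift y⟫ₘ = coshDist x y := by
  simp only [lift, map_smul, LinearMap.smul_apply, smul_eq_mul, minkowski_apply, coshDist]
  field_simp

lemma coe_proj {v : ℝ × E} (hv : v ∈ futureCone E) : (proj v : E) = v.1⁻¹ • v.2 := by
  rw [proj, dif_pos hv]

lemma continuousAt_proj {v : ℝ × E} (hv : v ∈ futureCone E) : ContinuousAt proj v := by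
  have hpos : v.1 ≠ 0 := ((norm_nonneg _).trans_lt hv).ne'
  have hcont : ContinuousAt (fun w : ℝ × E => w.1⁻¹ • w.2) v :=
    (continuousAt_fst.inv₀ hpos).smul continuousAt_snd
  refine Topology.IsInducing.subtypeVal.continuousAt_iff.2 (hcont.congr ?_)
  filter_upwards [isOpen_futureCone.mem_nhds hv] with w hw
  exact (coe_proj hw).symm

lemma coshDist_comm (x y : KleinBall E) : coshDist x y = coshDist y x := by
  rw [← minkowski_lift, minkowski_comm, minkowski_lift]

@[simp]
lemma coshDist_self (x : KleinBall E) : coshDist x x = 1 := by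
  rw [coshDist, real_inner_self_eq_norm_sq, ← factor_sq, sq, div_self (by simp [x.factor_pos.ne'])]

@[fun_prop]
lemma continuous_coshDist {α : Type*} [TopologicalSpace α] {f g : α → KleinBall E}
    (hf : Continuous f) (hg : Continuous g) : Continuous fun x => coshDist (f x) (g x) := by
  simp only [← minkowski_lift]
  fun_prop

lemma coshDist_pos (x y : KleinBall E) : 0 < coshDist x y := by
  rw [← minkowski_lift]
  exact minkowski_pos x.lift_mem_futureCone y.lift_mem_futureCone

lemma one_lt_coshDist {x y : KleinBall E} (h : x ≠ y) : 1 < coshDist x y := by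
  have hidentity : (1 - inner ℝ (x : E) y) ^ 2 - factor x ^ 2 * factor y ^ 2 =
      factor x ^ 2 * ‖(x : E) - y‖ ^ 2 + inner ℝ (x : E) ((x : E) - y) ^ 2 := by
    rw [factor_sq, factor_sq, inner_sub_right, norm_sub_sq_real, real_inner_self_eq_norm_sq]
    ring
  have hxy : 0 < ‖(x : E) - y‖ := norm_pos_iff.2 (sub_ne_zero.2 (Subtype.coe_injective.ne h))
  have hsq : (1 : ℝ) ^ 2 < coshDist x y ^ 2 := by
    have := x.factor_pos
    have := y.factor_pos
    rw [coshDist, div_pow, one_pow, one_lt_div (by positivity), mul_pow]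
    nlinarith [sq_nonneg (inner ℝ (x : E) ((x : E) - y)),
      mul_pos (pow_pos x.factor_pos 2) (pow_pos hxy 2)]
  exact lt_of_pow_lt_pow_left₀ 2 (coshDist_pos x y).le hsq

lemma one_le_coshDist (x y : KleinBall E) : 1 ≤ coshDist x y := by
  rcases eq_or_ne x y with rfl | h
  · rw [coshDist_self]
  · exact (one_lt_coshDist h).le

lemma coshDist_eq_one_iff {x y : KleinBall E} : coshDist x y = 1 ↔ x = y :=
  ⟨fun h => by_contra fun hne => (one_lt_coshDist hne).ne' h, fun h => h ▸ coshDist_self x⟩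

lemma proj_smul {t : ℝ} (ht : 0 < t) (v : ℝ × E) : proj (t • v) = proj v := by
  by_cases hv : v ∈ futureCone E
  · have htv := (futureCone E).smul_mem ht hv
    refine Subtype.ext ?_
    rw [coe_proj hv, coe_proj htv, Prod.smul_fst, Prod.smul_snd, smul_eq_mul, mul_inv, smul_smul,
      mul_right_comm, inv_mul_cancel₀ ht.ne', one_mul]
  · rw [proj, proj, dif_neg hv, dif_neg (by rwa [(futureCone E).smul_mem_iff ht])]

@[simp]
lemma proj_lift (x : KleinBall E) : proj (lift x) = x := by
  have h : ((1 : ℝ), (x : E)) ∈ futureCone E := x.norm_lt_one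
  rw [lift, proj_smul (inv_pos.2 x.factor_pos)]
  refine Subtype.ext ?_
  rw [coe_proj h, inv_one, one_smul]

lemma sqrt_smul_lift_proj {v : ℝ × E} (hv : v ∈ futureCone E) :
    √⟪v, v⟫ₘ • lift (proj v) = v := by
  have hpos : 0 < v.1 := (norm_nonneg _).trans_lt hv
  have hfactor : factor (proj v) = v.1⁻¹ * √⟪v, v⟫ₘ := by
    rw [factor, coe_proj hv, norm_smul, norm_inv, Real.norm_of_nonneg hpos.le, minkowski_self,
      ← Real.sqrt_sq (inv_pos.2 hpos).le, ← Real.sqrt_mul (by positivity),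
      Real.sqrt_sq (inv_pos.2 hpos).le]
    congr 1
    field_simp
  have hsqrt : √⟪v, v⟫ₘ = v.1 * factor (proj v) := by
    rw [hfactor, mul_inv_cancel_left₀ hpos.ne']
  rw [hsqrt, mul_smul, factor_smul_lift, coe_proj hv]
  ext <;> simp [hpos.ne']

lemma lift_proj {v : ℝ × E} (hv : v ∈ futureCone E) (h : ⟪v, v⟫ₘ = 1) : lift (proj v) = v := by
  simpa [h] using sqrt_smul_lift_proj hv

lemma sqrt_mul_coshDist_proj {v : ℝ × E} (hv : v ∈ futureCone E) (x : KleinBall E) :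
    √⟪v, v⟫ₘ * coshDist x (proj v) = ⟪lift x, v⟫ₘ := by
  conv_rhs => rw [← sqrt_smul_lift_proj hv, map_smul, minkowski_lift, smul_eq_mul]

section Between

variable {x y z r : KleinBall E} {k α β C : ℝ}

lemma mul_coshDist_of_smul_lift_eq (h : k • lift r = α • lift y + β • lift z) (x : KleinBall E) :
    k * coshDist x r = α * coshDist x y + β * coshDist x z := by
  simpa [minkowski_lift] using congrArg (fun v => ⟪lift x, v⟫ₘ) h

lemma add_le_of_smul_lift_eq (hα : 0 ≤ α) (hβ : 0 ≤ β)
    (h : k • lift r = α • lift y + β • lift z) : α + β ≤ k := by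
  have hr := mul_coshDist_of_smul_lift_eq h r
  rw [coshDist_self] at hr
  nlinarith [one_le_coshDist r y, one_le_coshDist r z]

lemma coshDist_le_of_smul_lift_eq (hk : 0 < k) (hα : 0 ≤ α) (hβ : 0 ≤ β)
    (h : k • lift r = α • lift y + β • lift z) (hy : coshDist x y ≤ C) (hz : coshDist x z ≤ C) :
    coshDist x r ≤ C := by
  have hC : 0 < C := (coshDist_pos x y).trans_le hy
  refine le_of_mul_le_mul_left ?_ hk
  calc k * coshDist x r = α * coshDist x y + β * coshDist x z :=
        mul_coshDist_of_smul_lift_eq h x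
    _ ≤ α * C + β * C := by gcongr
    _ = (α + β) * C := by ring
    _ ≤ k * C := by gcongr; exact add_le_of_smul_lift_eq hα hβ h

lemma coshDist_lt_of_smul_lift_eq (hk : 0 < k) (hα : 0 < α) (hβ : 0 ≤ β)
    (h : k • lift r = α • lift y + β • lift z) (hy : coshDist x y < C) (hz : coshDist x z ≤ C) :
    coshDist x r < C := by
  have hC : 0 < C := (coshDist_pos x y).trans hy
  refine lt_of_mul_lt_mul_left ?_ hk.le
  calc k * coshDist x r = α * coshDist x y + β * coshDist x z :=
        mul_coshDist_of_smul_lift_eq h x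
    _ < α * C + β * C := add_lt_add_of_lt_of_le (by gcongr) (by gcongr)
    _ = (α + β) * C := by ring
    _ ≤ k * C := by gcongr; exact add_le_of_smul_lift_eq hα.le hβ h

end Between

/-! ### Reflections -/

/-- The hyperbolic reflection that exchanges `a` and `b`; it is the identity if `a = b`. -/
def reflection (a b x : KleinBall E) : KleinBall E :=
  proj (bilinReflection minkowski (lift a - lift b) (lift x))

section Reflection

variable (a b x y : KleinBall E)

lemma minkowski_lift_sub_lift_self :
    ⟪lift a - lift b, lift a - lift b⟫ₘ = 2 * (1 - coshDist a b) := by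
  simp only [map_sub, LinearMap.sub_apply, minkowski_lift, coshDist_self, coshDist_comm b a]
  ring

lemma bilinReflection_lift_left :
    bilinReflection minkowski (lift a - lift b) (lift a) = lift b := by
  rcases eq_or_ne a b with rfl | hab
  · simp [bilinReflection_apply]
  · have h : 2 * (1 - coshDist a b) ≠ 0 := by linarith [one_lt_coshDist hab]
    have hcoeff : ⟪lift a - lift b, lift a⟫ₘ = 1 - coshDist a b := by
      rw [LinearMap.map_sub₂, minkowski_lift, minkowski_lift, coshDist_self, coshDist_comm b a]
    rw [bilinReflection_apply, minkowski_lift_sub_lift_self, hcoeff, div_mul_eq_mul_div,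
      div_self h, one_smul, sub_sub_cancel]

lemma minkowski_bilinReflection (e u v : ℝ × E) :
    ⟪bilinReflection minkowski e u, bilinReflection minkowski e v⟫ₘ = ⟪u, v⟫ₘ := by
  rw [apply_bilinReflection e isSymm_minkowski, involutive_bilinReflection minkowski e u]

variable {a b} in
lemma bilinReflection_mem_futureCone {v : ℝ × E} (hv : v ∈ futureCone E) :
    bilinReflection minkowski (lift a - lift b) v ∈ futureCone E := by
  refine mem_futureCone_of_minkowski_pos b.lift_mem_futureCone ?_ ?_
  · rw [minkowski_bilinReflection]
    exact minkowski_pos hv hv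
  · have h := minkowski_bilinReflection (lift a - lift b) (lift a) v
    rw [bilinReflection_lift_left] at h
    exact h ▸ minkowski_pos a.lift_mem_futureCone hv

lemma lift_reflection :
    lift (reflection a b x) = bilinReflection minkowski (lift a - lift b) (lift x) := by
  refine lift_proj (bilinReflection_mem_futureCone x.lift_mem_futureCone) ?_
  rw [minkowski_bilinReflection, minkowski_lift, coshDist_self]

lemma reflection_proj {v : ℝ × E} (hv : v ∈ futureCone E) :
    reflection a b (proj v) = proj (bilinReflection minkowski (lift a - lift b) v) := by
  have hpos : 0 < √⟪v, v⟫ₘ := Real.sqrt_pos.2 (minkowski_pos hv hv)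
  rw [reflection, ← proj_smul hpos, ← map_smul, sqrt_smul_lift_proj hv]

lemma involutive_reflection : Function.Involutive (reflection a b) := fun x => by
  rw [reflection, lift_reflection, involutive_bilinReflection, proj_lift]

@[simp]
lemma reflection_reflection : reflection a b (reflection a b x) = x := involutive_reflection a b x

@[simp]
lemma reflection_left : reflection a b a = b := by
  rw [reflection, bilinReflection_lift_left, proj_lift]

@[simp]
lemma reflection_right : reflection a b b = a := by
  simpa using reflection_reflection a b a

@[simp]
lemma coshDist_reflection_reflection :
    coshDist (reflection a b x) (reflection a b y) = coshDist x y := by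
  rw [← minkowski_lift, lift_reflection, lift_reflection, minkowski_bilinReflection, minkowski_lift]

lemma coshDist_reflection_comm :
    coshDist x (reflection a b y) = coshDist (reflection a b x) y := by
  rw [← coshDist_reflection_reflection a b, reflection_reflection]

lemma coshDist_reflection : coshDist x (reflection a b y) = coshDist x y +
    (coshDist x a - coshDist x b) * (coshDist y a - coshDist y b) / (coshDist a b - 1) := by
  have hpair (z : KleinBall E) : ⟪lift a - lift b, lift z⟫ₘ = coshDist z a - coshDist z b := by
    rw [LinearMap.map_sub₂, minkowski_lift, minkowski_lift, coshDist_comm a, coshDist_comm b]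
  calc coshDist x (reflection a b y)
      = coshDist x y - 2 / (2 * (1 - coshDist a b)) * (coshDist y a - coshDist y b) *
          (coshDist x a - coshDist x b) := by
        rw [← minkowski_lift, lift_reflection, bilinReflection_apply, map_sub, map_smul,
          smul_eq_mul, minkowski_comm (lift x) (lift a - lift b), hpair, hpair,
          minkowski_lift_sub_lift_self, minkowski_lift]
    _ = _ := by
        rw [← neg_sub (coshDist a b), div_mul_cancel_left₀ two_ne_zero, inv_neg]
        ring

variable {a b x y} in
lemma reflection_eq_self (h : coshDist x a = coshDist x b) : reflection a b x = x := by
  refine coshDist_eq_one_iff.1 ?_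
  rw [coshDist_comm, coshDist_reflection, h, sub_self, zero_mul, zero_div, add_zero, coshDist_self]

variable {a b x} in
lemma continuousAt_reflection (hab : a ≠ b) :
    ContinuousAt (fun z : KleinBall E × KleinBall E => reflection a z.1 z.2) (b, x) := by
  have hself : Continuous fun z : KleinBall E × KleinBall E =>
      ⟪lift a - lift z.1, lift a - lift z.1⟫ₘ := by fun_prop
  have hne : ⟪lift a - lift b, lift a - lift b⟫ₘ ≠ 0 := by
    rw [minkowski_lift_sub_lift_self]
    linarith [one_lt_coshDist hab]
  have hcoeff := (continuousAt_const (y := (2 : ℝ))).div₀ (hself.continuousAt (x := (b, x))) hne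
  have hcont : ContinuousAt (fun z : KleinBall E × KleinBall E =>
      bilinReflection minkowski (lift a - lift z.1) (lift z.2)) (b, x) := by
    simp only [bilinReflection_apply]
    fun_prop
  exact (continuousAt_proj (bilinReflection_mem_futureCone x.lift_mem_futureCone)).tendsto.comp
    hcont

lemma continuous_reflection : Continuous (reflection a b) := by
  rcases eq_or_ne a b with rfl | hab
  · exact continuous_id.congr fun x => (reflection_eq_self rfl).symm
  · exact continuous_iff_continuousAt.2 fun x =>
      (continuousAt_reflection hab).comp (f := fun x => (b, x)) (by fun_prop)

end Reflection

/-! ### Hyperbolic volume -/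

/-- The part below the hyperboloid of the cone over a set of points of the Klein model. -/
def truncatedCone (A : Set (KleinBall E)) : Set (ℝ × E) :=
  (futureCone E ∩ {v | ⟪v, v⟫ₘ ≤ 1}) ∩ proj ⁻¹' A

lemma smul_mem_truncatedCone_iff {A : Set (KleinBall E)} {t : ℝ} (ht : 0 < t) {x : KleinBall E} :
    t • ((1 : ℝ), (x : E)) ∈ truncatedCone A ↔ x ∈ A ∧ t ≤ (factor x)⁻¹ := by
  have hpos : 0 < t * factor x := mul_pos ht x.factor_pos
  have hself : ⟪(t * factor x) • lift x, (t * factor x) • lift x⟫ₘ = (t * factor x) ^ 2 := by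
    simp only [map_smul, LinearMap.smul_apply, minkowski_lift, coshDist_self, smul_eq_mul]
    ring
  rw [← factor_smul_lift, smul_smul, truncatedCone, Set.mem_inter_iff, Set.mem_preimage,
    proj_smul hpos, proj_lift, and_comm]
  refine and_congr_right fun _ => ⟨fun h => ?_, fun h =>
    ⟨(futureCone E).smul_mem hpos x.lift_mem_futureCone, ?_⟩⟩
  · have hle : ⟪(t * factor x) • lift x, (t * factor x) • lift x⟫ₘ ≤ 1 := h.2
    rwa [hself, sq_le_one_iff₀ hpos.le, ← le_div_iff₀ x.factor_pos, one_div] at hle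
  · change ⟪(t * factor x) • lift x, (t * factor x) • lift x⟫ₘ ≤ 1
    rwa [hself, sq_le_one_iff₀ hpos.le, ← le_div_iff₀ x.factor_pos, one_div]

open scoped Pointwise in
lemma preimage_prodMk_truncatedCone (A : Set (KleinBall E)) {t : ℝ} (ht : 0 < t) :
    Prod.mk t ⁻¹' truncatedCone A =
      t • ((↑) '' (A ∩ {x | t ≤ (factor x)⁻¹}) : Set E) := by
  ext w
  rw [Set.mem_preimage, Set.mem_smul_set]
  constructor
  · intro hw
    have hcone : (t, w) ∈ futureCone E := hw.1.1
    have hw' : w = t • (proj (t, w) : E) := by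
      rw [coe_proj hcone, smul_inv_smul₀ ht.ne']
    have htw : (t, w) = t • ((1 : ℝ), (proj (t, w) : E)) := by
      rw [Prod.smul_mk, smul_eq_mul, mul_one, ← hw']
    rw [htw, smul_mem_truncatedCone_iff ht] at hw
    exact ⟨_, ⟨_, hw, rfl⟩, hw'.symm⟩
  · rintro ⟨_, ⟨x, hx, rfl⟩, rfl⟩
    simpa using (smul_mem_truncatedCone_iff ht).2 hx

lemma preimage_truncatedCone (a b : KleinBall E) (A : Set (KleinBall E)) :
    bilinReflection minkowski (lift a - lift b) ⁻¹' truncatedCone A =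
      truncatedCone (reflection a b ⁻¹' A) := by
  ext v
  have hcone : bilinReflection minkowski (lift a - lift b) v ∈ futureCone E ↔ v ∈ futureCone E := by
    refine ⟨fun h => ?_, bilinReflection_mem_futureCone⟩
    simpa only [involutive_bilinReflection _ _ v] using
      bilinReflection_mem_futureCone (a := a) (b := b) h
  simp only [truncatedCone, Set.mem_preimage, Set.mem_inter_iff, SetLike.mem_coe, hcone,
    Set.mem_ofPred_eq, minkowski_bilinReflection]
  refine and_congr_right fun hv => ?_
  rw [reflection_proj _ _ hv.1]

section Volume

variable [FiniteDimensional ℝ E] [MeasurableSpace E] [BorelSpace E] (μ : Measure E)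
  [μ.IsAddHaarMeasure]

/-- The hyperbolic volume of the Klein model, with density `(1 - ‖x‖²)^(-(d + 1) / 2)` with
respect to a Haar measure of the ambient space of dimension `d`. -/
def kleinVolume (μ : Measure E) : Measure (KleinBall E) :=
  (μ.comap Subtype.val).withDensity fun x =>
    ENNReal.ofReal ((factor x)⁻¹ ^ (Module.finrank ℝ E + 1))

instance : IsLocallyFiniteMeasure (kleinVolume μ) := by
  have : IsFiniteMeasureOnCompacts (μ.comap ((↑) : KleinBall E → E)) :=
    .comap' _ continuous_subtype_val isOpenEmbedding_coe.measurableEmbedding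
  have : LocallyCompactSpace (KleinBall E) := Metric.isOpen_ball.locallyCompactSpace
  exact .withDensity_ofReal ((continuous_factor.inv₀ fun x => x.factor_pos.ne').pow _)

instance : (kleinVolume μ).IsOpenPosMeasure := by
  have : (μ.comap ((↑) : KleinBall E → E)).IsOpenPosMeasure := .comap μ isOpenEmbedding_coe
  refine (withDensity_absolutelyContinuous' ?_ ?_).isOpenPosMeasure
  · exact (ENNReal.measurable_ofReal.comp
      ((continuous_factor.inv₀ fun x => x.factor_pos.ne').pow _).measurable).aemeasurable
  · exact ae_of_all _ fun x =>
      (ENNReal.ofReal_pos.2 (pow_pos (inv_pos.2 x.factor_pos) _)).ne'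

lemma measurable_proj : Measurable (proj : ℝ × E → KleinBall E) := by
  refine measurable_of_restrict_of_restrict_compl isOpen_futureCone.measurableSet ?_ ?_
  · refine Continuous.measurable (ContinuousOn.domRestrict fun v hv => ?_)
    exact (continuousAt_proj hv).continuousWithinAt
  · have h : ((futureCone E : Set (ℝ × E))ᶜ).domRestrict proj = fun _ => origin E :=
      funext fun v => dif_neg v.2
    exact h ▸ measurable_const

lemma measurableSet_truncatedCone {A : Set (KleinBall E)} (hA : MeasurableSet A) :
    MeasurableSet (truncatedCone A) := by
  have hclosed : IsClosed {v : ℝ × E | ⟪v, v⟫ₘ ≤ 1} := isClosed_le (by fun_prop) continuous_const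
  exact (isOpen_futureCone.measurableSet.inter hclosed.measurableSet).inter (measurable_proj hA)

lemma measure_preimage_prodMk_truncatedCone {A : Set (KleinBall E)} (hA : MeasurableSet A)
    {t : ℝ} (ht : 0 < t) :
    μ (Prod.mk t ⁻¹' truncatedCone A) =
      (μ.comap Subtype.val).restrict A {x | t ≤ (factor x)⁻¹} *
        ENNReal.ofReal (t ^ Module.finrank ℝ E) := by
  rw [preimage_prodMk_truncatedCone A ht, Measure.addHaar_smul, abs_of_pos (pow_pos ht _),
    Measure.restrict_apply' hA, isOpenEmbedding_coe.measurableEmbedding.comap_apply, mul_comm,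
    Set.inter_comm]

/-- Integrating in polar coordinates along the rays of the cone gives the density of the
hyperbolic volume. -/
lemma kleinVolume_eq_mul_truncatedCone {A : Set (KleinBall E)} (hA : MeasurableSet A) :
    kleinVolume μ A =
      (Module.finrank ℝ E + 1 : ℕ) * (volume.prod μ) (truncatedCone A) := by
  have hslice (t : ℝ) (ht : t ∉ Set.Ioi 0) : μ (Prod.mk t ⁻¹' truncatedCone A) = 0 := by
    refine measure_mono_null (fun w hw => ?_) measure_empty
    exact ht ((norm_nonneg w).trans_lt hw.1.1)
  have hlayer := lintegral_rpow_eq_lintegral_meas_le_mul ((μ.comap Subtype.val).restrict A)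
    (ae_of_all _ fun x : KleinBall E => (inv_pos.2 x.factor_pos).le)
    (continuous_factor.inv₀ fun x => x.factor_pos.ne').measurable.aemeasurable
    (p := Module.finrank ℝ E + 1) (by positivity)
  simp only [add_sub_cancel_right, Real.rpow_natCast] at hlayer
  norm_cast at hlayer
  rw [kleinVolume, withDensity_apply _ hA, hlayer,
    Measure.prod_apply (measurableSet_truncatedCone hA),
    ← setLIntegral_eq_of_support_subset (Function.support_subset_iff'.2 hslice),
    setLIntegral_congr_fun measurableSet_Ioi fun t ht =>
      measure_preimage_prodMk_truncatedCone μ hA ht]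

lemma measurePreserving_reflection (a b : KleinBall E) :
    MeasurePreserving (reflection a b) (kleinVolume μ) (kleinVolume μ) := by
  have hmeas : Measurable (reflection a b) := (continuous_reflection a b).measurable
  refine ⟨hmeas, Measure.ext fun A hA => ?_⟩
  have habs := abs_det_of_involutive (involutive_bilinReflection minkowski (lift a - lift b))
  rw [Measure.map_apply hmeas hA, kleinVolume_eq_mul_truncatedCone μ (hmeas hA),
    kleinVolume_eq_mul_truncatedCone μ hA, ← preimage_truncatedCone,
    Measure.addHaar_preimage_linearMap _ (abs_ne_zero.1 (habs ▸ one_ne_zero)), abs_inv, habs,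
    inv_one, ENNReal.ofReal_one, one_mul]

end Volume

/-! ### Balls and convex hulls -/

/-- The closed hyperbolic ball with centre `m` whose radius has hyperbolic cosine `c`. -/
def coshBall (m : KleinBall E) (c : ℝ) : Set (KleinBall E) := {y | coshDist y m ≤ c}

lemma mem_coshBall {m y : KleinBall E} {c : ℝ} : y ∈ coshBall m c ↔ coshDist y m ≤ c := Iff.rfl

lemma isClosed_coshBall (m : KleinBall E) (c : ℝ) : IsClosed (coshBall m c) :=
  isClosed_le (by fun_prop) continuous_const

lemma preimage_reflection_coshBall (a b m : KleinBall E) (c : ℝ) :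
    reflection a b ⁻¹' coshBall m c = coshBall (reflection a b m) c := by
  ext y
  rw [Set.mem_preimage, mem_coshBall, mem_coshBall, coshDist_reflection_comm]

lemma coshBall_origin_cosh {r : ℝ} (hr : 0 ≤ r) :
    coshBall (origin E) (Real.cosh r) = {y : KleinBall E | ‖(y : E)‖ ≤ Real.tanh r} := by
  ext y
  have hcosh := Real.cosh_pos r
  have htanh : 0 ≤ Real.tanh r := by
    rw [Real.tanh_eq_sinh_div_cosh]
    exact div_nonneg (Real.sinh_nonneg_iff.2 hr) hcosh.le
  have htanh_sq : Real.tanh r ^ 2 = 1 - (Real.cosh r)⁻¹ ^ 2 := by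
    rw [Real.tanh_eq_sinh_div_cosh, div_pow, Real.sinh_sq, inv_pow]
    field_simp
  have horigin : coshDist y (origin E) = (factor y)⁻¹ := by
    simp [coshDist, origin, factor]
  rw [mem_coshBall, horigin, inv_le_comm₀ y.factor_pos hcosh,
    ← sq_le_sq₀ (inv_pos.2 hcosh).le y.factor_pos.le, factor_sq, le_sub_comm, ← htanh_sq,
    sq_le_sq₀ (norm_nonneg _) htanh]
  rfl

lemma coshDist_le_of_mem_coshBall {m y z : KleinBall E} {c : ℝ} (hy : y ∈ coshBall m c)
    (hz : z ∈ coshBall m c) : coshDist y z ≤ 2 * c ^ 2 - 1 := by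
  -- The image of `z` under the point reflection at `m`.
  set w : ℝ × E := (2 * coshDist z m) • lift m - lift z with hw
  have hself : ⟪w, w⟫ₘ = 1 := by
    simp only [hw, map_sub, map_smul, LinearMap.sub_apply, LinearMap.smul_apply, minkowski_lift,
      coshDist_self, coshDist_comm m z, smul_eq_mul]
    ring
  have hfuture : w ∈ futureCone E := by
    refine mem_futureCone_of_minkowski_pos m.lift_mem_futureCone (hself ▸ one_pos) ?_
    have := coshDist_pos z m
    simp only [hw, map_sub, map_smul, minkowski_lift, coshDist_self, coshDist_comm m z, smul_eq_mul]
    linarith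
  have hpair : coshDist y (proj w) = 2 * coshDist z m * coshDist y m - coshDist y z := by
    rw [← minkowski_lift, lift_proj hfuture hself, hw, map_sub, map_smul, minkowski_lift,
      minkowski_lift, smul_eq_mul]
  have hprod : coshDist z m * coshDist y m ≤ c * c :=
    mul_le_mul hz hy (coshDist_pos y m).le ((coshDist_pos z m).le.trans hz)
  linarith [one_le_coshDist y (proj w)]

lemma convex_coe_coshBall (m : KleinBall E) (c : ℝ) :
    Convex ℝ ((↑) '' coshBall m c : Set E) := by
  rintro _ ⟨y, hy, rfl⟩ _ ⟨z, hz, rfl⟩ s t hs ht hst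
  let r : KleinBall E := ⟨s • y + t • z, convex_ball 0 1 y.2 z.2 hs ht hst⟩
  have hr : factor r • lift r = (s * factor y) • lift y + (t * factor z) • lift z := by
    rw [mul_smul, mul_smul, factor_smul_lift, factor_smul_lift, factor_smul_lift]
    ext <;> simp [r, hst]
  rw [mem_coshBall, coshDist_comm] at hy hz
  refine ⟨r, ?_, rfl⟩
  rw [mem_coshBall, coshDist_comm]
  exact coshDist_le_of_smul_lift_eq r.factor_pos (mul_nonneg hs y.factor_pos.le)
    (mul_nonneg ht z.factor_pos.le) hr hy hz

/-- The closed convex hull. It is formed in the ambient space, since hyperbolic geodesics of the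
Klein model are Euclidean segments. -/
def hull (K : Set (KleinBall E)) : Set (KleinBall E) :=
  (↑) ⁻¹' closedConvexHull ℝ ((↑) '' K : Set E)

lemma subset_hull (K : Set (KleinBall E)) : K ⊆ hull K :=
  Set.image_subset_iff.1 subset_closedConvexHull

lemma isClosed_hull (K : Set (KleinBall E)) : IsClosed (hull K) :=
  isClosed_closedConvexHull.preimage continuous_subtype_val

section FiniteDimensional

variable [FiniteDimensional ℝ E]

lemma isCompact_coshBall (m : KleinBall E) (c : ℝ) : IsCompact (coshBall m c) := by
  have horigin (r : ℝ) (hr : 0 ≤ r) : IsCompact (coshBall (origin E) (Real.cosh r)) := by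
    rw [coshBall_origin_cosh hr, Subtype.isCompact_iff]
    convert isCompact_closedBall (0 : E) (Real.tanh r)
    ext y
    simpa using fun h : ‖y‖ ≤ Real.tanh r => h.trans_lt (Real.tanh_lt_one r)
  rcases lt_or_ge c 1 with hc | hc
  · convert isCompact_empty
    exact Set.eq_empty_of_forall_notMem fun y hy => (hc.trans_le (one_le_coshDist y m)).not_ge hy
  · rw [← Real.cosh_arcosh hc, ← reflection_left (origin E) m, ← preimage_reflection_coshBall,
      ← (involutive_reflection _ _).image_eq_preimage_symm]
    exact (horigin _ (Real.arcosh_nonneg hc)).image (continuous_reflection _ _)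

lemma hull_subset_coshBall {K : Set (KleinBall E)} {m : KleinBall E} {c : ℝ}
    (hK : K ⊆ coshBall m c) : hull K ⊆ coshBall m c := by
  have hclosed : IsClosed ((↑) '' coshBall m c : Set E) :=
    ((isCompact_coshBall m c).image continuous_subtype_val).isClosed
  refine (Set.preimage_mono (closedConvexHull_min (Set.image_mono hK)
    (convex_coe_coshBall m c) hclosed)).trans ?_
  rw [Set.preimage_image_eq _ Subtype.coe_injective]

variable [MeasurableSpace E] [BorelSpace E] (μ : Measure E) [μ.IsAddHaarMeasure]

lemma hull_subset_closure_interior {K : Set (KleinBall E)} (hK : kleinVolume μ (hull K) ≠ 0) :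
    hull K ⊆ closure (interior (hull K)) := by
  have hμ : μ (closedConvexHull ℝ ((↑) '' K : Set E)) ≠ 0 := fun h => hK <| by
    refine withDensity_absolutelyContinuous _ _ ?_
    rw [isOpenEmbedding_coe.measurableEmbedding.comap_apply]
    exact measure_mono_null (Set.image_preimage_subset _ _) h
  have hopen : IsOpenMap ((↑) : KleinBall E → E) := isOpenEmbedding_coe.isOpenMap
  rw [hull, ← hopen.preimage_interior_eq_interior_preimage continuous_subtype_val,
    ← hopen.preimage_closure_eq_closure_preimage continuous_subtype_val]
  exact Set.preimage_mono (convex_subset_closure_interior μ convex_closedConvexHull hμ)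

end FiniteDimensional

/-! ### Extremal sets -/

/-- A compact set of hyperbolic diameter at most `arcosh C`. -/
structure IsAdmissible (C : ℝ) (K : Set (KleinBall E)) : Prop where
  isCompact : IsCompact K
  coshDist_le : ∀ ⦃x⦄, x ∈ K → ∀ ⦃y⦄, y ∈ K → coshDist x y ≤ C

/-- The points of `K` at distance `arcosh C` from `x`; if `K` is admissible, these are the points
of `K` opposite to `x` on a diameter. -/
def opposites (C : ℝ) (K : Set (KleinBall E)) (x : KleinBall E) : Set (KleinBall E) :=
  {u ∈ K | coshDist x u = C}

/-- Moving `u` slightly away from `q` increases the distance to `q`. -/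
lemma mem_frontier_of_forall_coshDist_le {K : Set (KleinBall E)} {q u : KleinBall E} (hqu : q ≠ u)
    (hu : u ∈ K) (hmax : ∀ y ∈ K, coshDist q y ≤ coshDist q u) : u ∈ frontier K := by
  refine ⟨subset_closure hu, fun hint => ?_⟩
  let v : ℝ → ℝ × E := fun t => (1 + t) • lift u - t • lift q
  have hv : Continuous v := by fun_prop
  have hv₀ : v 0 = lift u := by simp [v]
  have hfuture : ∀ᶠ t in 𝓝 (0 : ℝ), v t ∈ futureCone E :=
    hv.continuousAt.eventually_mem (isOpen_futureCone.mem_nhds (hv₀ ▸ u.lift_mem_futureCone))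
  have hproj : ContinuousAt (fun t => proj (v t)) 0 :=
    (hv₀ ▸ continuousAt_proj u.lift_mem_futureCone : ContinuousAt proj (v 0)).comp
      hv.continuousAt
  have hmem : ∀ᶠ t in 𝓝 (0 : ℝ), proj (v t) ∈ K :=
    hproj.eventually_mem (by rwa [hv₀, proj_lift, ← mem_interior_iff_mem_nhds])
  obtain ⟨t, ⟨ht, hK⟩, ht₀⟩ := (((hfuture.and hmem).filter_mono nhdsWithin_le_nhds).and
    (self_mem_nhdsWithin (s := Set.Ioi 0))).exists
  replace ht₀ : 0 < t := ht₀
  have hbetween : (1 + t) • lift u = t • lift q + √⟪v t, v t⟫ₘ • lift (proj (v t)) := by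
    rw [sqrt_smul_lift_proj ht, add_sub_cancel]
  exact lt_irrefl _ (coshDist_lt_of_smul_lift_eq (by positivity) ht₀ (Real.sqrt_nonneg _) hbetween
    (by simpa using one_lt_coshDist hqu) (hmax _ hK))

namespace IsAdmissible

variable {C : ℝ} {K : Set (KleinBall E)}

lemma insert (hK : IsAdmissible C K) (hC : 1 ≤ C) {p : KleinBall E}
    (hp : ∀ y ∈ K, coshDist p y ≤ C) : IsAdmissible C (insert p K) where
  isCompact := hK.isCompact.insert p
  coshDist_le := by
    rintro x (rfl | hx) y (rfl | hy)
    · rwa [coshDist_self]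
    · exact hp y hy
    · exact coshDist_comm x y ▸ hp x hx
    · exact hK.coshDist_le hx hy

lemma mem_frontier_of_mem_opposites (hK : IsAdmissible C K) (hC : 1 < C) {x u : KleinBall E}
    (hx : x ∈ K) (hu : u ∈ opposites C K x) : u ∈ frontier K := by
  refine mem_frontier_of_forall_coshDist_le ?_ hu.1 fun y hy => hu.2 ▸ hK.coshDist_le hx hy
  rintro rfl
  exact hC.ne (hu.2 ▸ (coshDist_self x).symm)

lemma coshDist_lt_of_mem_interior (hK : IsAdmissible C K) (hC : 1 < C) {x o : KleinBall E}
    (hx : x ∈ K) (ho : o ∈ interior K) : coshDist x o < C := by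
  have hoK : o ∈ K := interior_subset ho
  exact (hK.coshDist_le hx hoK).lt_of_ne fun h =>
    (hK.mem_frontier_of_mem_opposites hC hx ⟨hoK, h⟩).2 ho

lemma preimage_reflection (hK : IsAdmissible C K) (a b : KleinBall E) :
    IsAdmissible C (reflection a b ⁻¹' K) where
  isCompact := by
    rw [← (involutive_reflection a b).image_eq_preimage_symm]
    exact hK.isCompact.image (continuous_reflection a b)
  coshDist_le x hx y hy := by
    rw [← coshDist_reflection_reflection a b]
    exact hK.coshDist_le hx hy

lemma hull [FiniteDimensional ℝ E] (hK : IsAdmissible C K) : IsAdmissible C (hull K) := by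
  have hmixed (y : KleinBall E) (hy : y ∈ KleinBall.hull K) : K ⊆ coshBall y C := fun x hx =>
    mem_coshBall.2 (coshDist_comm x y ▸
      hull_subset_coshBall (fun z hz => hK.coshDist_le hz hx) hy)
  refine ⟨?_, fun x hx y hy => hull_subset_coshBall (hmixed y hy) hx⟩
  rcases (KleinBall.hull K).eq_empty_or_nonempty with hempty | ⟨y, hy⟩
  · exact hempty ▸ isCompact_empty
  · exact (isCompact_coshBall y C).of_isClosed_subset (isClosed_hull K)
      (hull_subset_coshBall (hmixed y hy))

end IsAdmissible

/-- An admissible set of maximal, positive volume. -/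
structure IsExtremal [MeasurableSpace E] (μ : Measure E) (C : ℝ) (K : Set (KleinBall E)) : Prop
    extends IsAdmissible C K where
  volume_pos : 0 < kleinVolume μ K
  volume_le : ∀ ⦃L⦄, IsAdmissible C L → kleinVolume μ L ≤ kleinVolume μ K

namespace IsExtremal

variable [MeasurableSpace E] {μ : Measure E} {C : ℝ} {K L : Set (KleinBall E)}

lemma of_volume_le (hK : IsExtremal μ C K) (hL : IsAdmissible C L)
    (hKL : kleinVolume μ K ≤ kleinVolume μ L) : IsExtremal μ C L where
  toIsAdmissible := hL
  volume_pos := hK.volume_pos.trans_le hKL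
  volume_le _ hL' := (hK.volume_le hL').trans hKL

lemma nonempty (hK : IsExtremal μ C K) : K.Nonempty :=
  nonempty_of_measure_ne_zero hK.volume_pos.ne'

lemma one_le (hK : IsExtremal μ C K) : 1 ≤ C := by
  obtain ⟨x, hx⟩ := hK.nonempty
  exact coshDist_self x ▸ hK.coshDist_le hx hx

variable [FiniteDimensional ℝ E] [BorelSpace E] [μ.IsAddHaarMeasure]

lemma preimage_reflection (hK : IsExtremal μ C K) (a b : KleinBall E) :
    IsExtremal μ C (reflection a b ⁻¹' K) :=
  hK.of_volume_le (hK.toIsAdmissible.preimage_reflection a b)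
    ((measurePreserving_reflection μ a b).measure_preimage
      hK.isCompact.measurableSet.nullMeasurableSet).ge

/-- The closure of the interior of a convex set of positive volume contains the set; so a point of
`hull L` outside of `K` would make the volume of `hull L` larger than that of `K`. -/
lemma hull_subset (hK : IsExtremal μ C K) (hL : IsAdmissible C L) (hKL : K ⊆ L) :
    hull L ⊆ K := by
  intro z hz
  by_contra hzK
  have hKhull : K ⊆ hull L := hKL.trans (subset_hull L)
  have hopen : IsOpen Kᶜ := hK.isCompact.isClosed.isOpen_compl
  have hpos : kleinVolume μ (hull L) ≠ 0 := (hK.volume_pos.trans_le (measure_mono hKhull)).ne'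
  have hnonempty : (Kᶜ ∩ interior (hull L)).Nonempty :=
    mem_closure_iff.1 (hull_subset_closure_interior μ hpos hz) _ hopen hzK
  have hgain : 0 < kleinVolume μ (Kᶜ ∩ interior (hull L)) :=
    (hopen.inter isOpen_interior).measure_pos _ hnonempty
  refine (hK.volume_le hL.hull).not_gt ?_
  calc kleinVolume μ K
      < kleinVolume μ K + kleinVolume μ (Kᶜ ∩ interior (hull L)) :=
        ENNReal.lt_add_right hK.isCompact.measure_lt_top.ne hgain.ne'
    _ = kleinVolume μ (K ∪ (Kᶜ ∩ interior (hull L))) :=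
        (measure_union (disjoint_compl_right.mono_right Set.inter_subset_left)
          (hopen.inter isOpen_interior).measurableSet).symm
    _ ≤ kleinVolume μ (hull L) :=
        measure_mono (Set.union_subset hKhull (Set.inter_subset_right.trans interior_subset))

lemma mem_of_forall_coshDist_le (hK : IsExtremal μ C K) {p : KleinBall E}
    (hp : ∀ y ∈ K, coshDist p y ≤ C) : p ∈ K :=
  hK.hull_subset (hK.toIsAdmissible.insert hK.one_le hp) (Set.subset_insert p K)
    (subset_hull _ (Set.mem_insert p K))

lemma interior_nonempty (hK : IsExtremal μ C K) : (interior K).Nonempty := by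
  have hhull : hull K = K :=
    (hK.hull_subset hK.toIsAdmissible subset_rfl).antisymm (subset_hull K)
  have hclosure := hull_subset_closure_interior μ (hhull.symm ▸ hK.volume_pos.ne')
  rw [hhull] at hclosure
  exact closure_nonempty_iff.1 (hK.nonempty.mono hclosure)

lemma mem_of_smul_lift_eq (hK : IsExtremal μ C K) {y z r : KleinBall E} {k α β : ℝ} (hk : 0 < k)
    (hα : 0 ≤ α) (hβ : 0 ≤ β) (h : k • lift r = α • lift y + β • lift z) (hy : y ∈ K)
    (hz : z ∈ K) : r ∈ K :=
  hK.mem_of_forall_coshDist_le fun x hx => coshDist_comm x r ▸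
    coshDist_le_of_smul_lift_eq hk hα hβ h (hK.coshDist_le hx hy) (hK.coshDist_le hx hz)

lemma exists_mem_opposites (hK : IsExtremal μ C K) {x : KleinBall E} (hx : x ∈ frontier K) :
    (opposites C K x).Nonempty := by
  have hxK : x ∈ K := hK.isCompact.isClosed.frontier_subset hx
  by_contra! hne
  have hlt (u : KleinBall E) (hu : u ∈ K) : coshDist x u < C :=
    (hK.coshDist_le hxK hu).lt_of_ne fun h => (Set.ext_iff.1 hne u).1 ⟨hu, h⟩
  have hnear : ∀ᶠ y in 𝓝 x, ∀ u ∈ K, coshDist y u < C :=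
    hK.isCompact.eventually_forall_of_forall_eventually fun u hu =>
      (by fun_prop : Continuous fun z : KleinBall E × KleinBall E => coshDist z.1 z.2)
        |>.continuousAt.eventually_lt_const (hlt u hu)
  exact hx.2 (mem_interior_iff_mem_nhds.2 <| hnear.mono fun y hy =>
    hK.mem_of_forall_coshDist_le fun u hu => (hy u hu).le)

end IsExtremal

/-! ### Polarization -/

/-- The closed half-space of the points that are at least as close to `a` as to `b`. -/
def halfSpace (a b : KleinBall E) : Set (KleinBall E) := {z | coshDist z a ≤ coshDist z b}

lemma isClosed_halfSpace (a b : KleinBall E) : IsClosed (halfSpace a b) :=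
  isClosed_le (by fun_prop) (by fun_prop)

lemma reflection_mem_halfSpace {a b z : KleinBall E} (hz : z ∉ halfSpace a b) :
    reflection a b z ∈ halfSpace a b := by
  change ¬ coshDist z a ≤ coshDist z b at hz
  change coshDist (reflection a b z) a ≤ coshDist (reflection a b z) b
  rw [← coshDist_reflection_comm, ← coshDist_reflection_comm, reflection_left, reflection_right]
  exact (not_le.1 hz).le

lemma coshDist_le_coshDist_reflection {a b x y : KleinBall E} (hx : x ∈ halfSpace a b)
    (hy : y ∈ halfSpace a b) : coshDist x y ≤ coshDist x (reflection a b y) := by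
  rw [coshDist_reflection]
  exact le_add_of_nonneg_right (div_nonneg
    (mul_nonneg_of_nonpos_of_nonpos (sub_nonpos.2 hx) (sub_nonpos.2 hy))
    (sub_nonneg.2 (one_le_coshDist a b)))

lemma IsAdmissible.polarization {C : ℝ} {K : Set (KleinBall E)} (hK : IsAdmissible C K)
    (a b : KleinBall E) :
    IsAdmissible C (_root_.polarization (reflection a b) (halfSpace a b) K) := by
  have hρK : IsAdmissible C (reflection a b ⁻¹' K) := hK.preimage_reflection a b
  have hmixed {x y} (hx : x ∈ K) (hxS : x ∈ halfSpace a b) (hy : y ∈ reflection a b ⁻¹' K)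
      (hyS : y ∈ halfSpace a b) : coshDist x y ≤ C :=
    (coshDist_le_coshDist_reflection hxS hyS).trans (hK.coshDist_le hx hy)
  refine ⟨(hK.isCompact.inter hρK.isCompact).union
    ((hK.isCompact.union hρK.isCompact).inter_right (isClosed_halfSpace a b)), ?_⟩
  rintro x (⟨hx, hx'⟩ | ⟨hx | hx, hxS⟩) y (⟨hy, hy'⟩ | ⟨hy | hy, hyS⟩)
  · exact hK.coshDist_le hx hy
  · exact hK.coshDist_le hx hy
  · exact hρK.coshDist_le hx' hy
  · exact hK.coshDist_le hx hy
  · exact hK.coshDist_le hx hy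
  · exact hmixed hx hxS hy hyS
  · exact hρK.coshDist_le hx hy'
  · exact coshDist_comm x y ▸ hmixed hy hyS hx hxS
  · exact hρK.coshDist_le hx hy

namespace IsExtremal

variable [FiniteDimensional ℝ E] [MeasurableSpace E] [BorelSpace E] {μ : Measure E}
  [μ.IsAddHaarMeasure] {C : ℝ} {K : Set (KleinBall E)}

lemma polarization (hK : IsExtremal μ C K) (a b : KleinBall E) :
    IsExtremal μ C (_root_.polarization (reflection a b) (halfSpace a b) K) :=
  hK.of_volume_le (hK.toIsAdmissible.polarization a b)
    (measure_le_polarization (measurePreserving_reflection μ a b) (involutive_reflection a b)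
      (fun _ => reflection_mem_halfSpace) (isClosed_halfSpace a b).measurableSet
      hK.isCompact.measurableSet)

lemma mem_frontier_polarization (hK : IsExtremal μ C K) {x b : KleinBall E} (hx : x ∈ frontier K)
    (hb : b ∉ K) :
    x ∈ frontier (_root_.polarization (reflection x b) (halfSpace x b) K) := by
  have hxK : x ∈ K := hK.isCompact.isClosed.frontier_subset hx
  have hρ : x ∉ reflection x b ⁻¹' K := by rwa [Set.mem_preimage, reflection_left]
  have hxS : x ∈ halfSpace x b := (coshDist_self x).trans_le (one_le_coshDist x b)
  refine ⟨subset_closure (.inr ⟨.inl hxK, hxS⟩), fun hint => hx.2 ?_⟩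
  rw [mem_interior_iff_mem_nhds] at hint ⊢
  filter_upwards [hint, (hK.preimage_reflection x b).isCompact.isClosed.isOpen_compl.mem_nhds hρ]
    with y hy hyρ
  rcases hy with ⟨h, -⟩ | ⟨h | h, -⟩
  exacts [h, h, absurd h hyρ]

/-- Apply `exists_mem_opposites` to the polarization of `K` towards `x`. -/
lemma exists_mem_opposites_of_notMem (hK : IsExtremal μ C K) {x b : KleinBall E}
    (hx : x ∈ frontier K) (hb : b ∉ K) :
    ∃ u ∈ opposites C K x, reflection x b u ∈ K ∨ C ≤ coshDist u b := by
  have hxK : x ∈ K := hK.isCompact.isClosed.frontier_subset hx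
  obtain ⟨u, hu, hxu⟩ := (hK.polarization x b).exists_mem_opposites
    (hK.mem_frontier_polarization hx hb)
  have hux : coshDist u x = C := coshDist_comm u x ▸ hxu
  rcases hu with ⟨hu, hρu⟩ | ⟨hu | hρu, huS⟩
  · exact ⟨u, ⟨hu, hxu⟩, .inl hρu⟩
  · exact ⟨u, ⟨hu, hxu⟩, .inr (hux ▸ huS)⟩
  · have hformula : coshDist x (reflection x b u) = coshDist u b := by
      rw [coshDist_reflection_comm, reflection_left, coshDist_comm]
    have hub : coshDist u b = C := (hformula ▸ hK.coshDist_le hxK hρu).antisymm (hux ▸ huS)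
    have hfixed : reflection x b u = u := reflection_eq_self (hux.trans hub.symm)
    exact ⟨u, ⟨hfixed ▸ hρu, hxu⟩, .inr hub.ge⟩

/-- If this fails, then it also fails for all points near `p` in place of `p`, some of which are not
in `K`. -/
lemma exists_reflection_mem_opposites (hK : IsExtremal μ C K) {x p : KleinBall E}
    (hx : x ∈ frontier K) (hp : p ∈ frontier K) :
    ∃ u ∈ opposites C K x, reflection x p u ∈ opposites C K p := by
  have hclosed : IsClosed K := hK.isCompact.isClosed
  rcases eq_or_ne x p with rfl | hxp
  · obtain ⟨u, hu⟩ := hK.exists_mem_opposites hx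
    exact ⟨u, hu, (reflection_eq_self (a := x) (b := x) (x := u) rfl).symm ▸ hu⟩
  by_contra! hne
  have hnotMem (u : KleinBall E) (hu : u ∈ opposites C K x) : reflection x p u ∉ K := fun h =>
    hne u hu ⟨h, by rw [coshDist_reflection_comm, reflection_right, hu.2]⟩
  have hlt (u : KleinBall E) (hu : u ∈ opposites C K x) : coshDist u p < C :=
    (hK.coshDist_le hu.1 (hclosed.frontier_subset hp)).lt_of_ne fun h =>
      hnotMem u hu (by rw [reflection_eq_self (by rw [h, coshDist_comm, hu.2])]; exact hu.1)
  have hcompact : IsCompact (opposites C K x) :=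
    hK.isCompact.inter_right (isClosed_eq (by fun_prop) continuous_const)
  have hnear : ∀ᶠ b in 𝓝 p, ∀ u ∈ opposites C K x, reflection x b u ∉ K ∧ coshDist u b < C := by
    refine hcompact.eventually_forall_of_forall_eventually fun u hu => ?_
    have hcont : Continuous fun z : KleinBall E × KleinBall E => coshDist z.2 z.1 := by fun_prop
    exact ((continuousAt_reflection hxp).eventually_mem
      (hclosed.isOpen_compl.mem_nhds (hnotMem u hu))).and
        (hcont.continuousAt.eventually_lt_const (hlt u hu))
  have hfrequently : ∃ᶠ b in 𝓝 p, b ∈ Kᶜ := by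
    rw [← mem_closure_iff_frequently]
    exact (frontier_eq_closure_inter_closure (s := K) ▸ hp).2
  obtain ⟨b, hb, hbK⟩ := (hfrequently.and_eventually hnear).exists
  obtain ⟨u, hu, h | h⟩ := hK.exists_mem_opposites_of_notMem hx hb
  · exact (hbK u hu).1 h
  · exact (hbK u hu).2.not_ge h

end IsExtremal

/-! ### Uniqueness of opposite points -/

lemma eventually_lift_add_smul_mem_futureCone (q : KleinBall E) (e : ℝ × E) :
    ∀ᶠ t in 𝓝[>] (0 : ℝ), lift q + t • e ∈ futureCone E := by
  have hcont : Continuous fun t : ℝ => lift q + t • e := by fun_prop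
  refine hcont.continuousWithinAt.eventually_mem (isOpen_futureCone.mem_nhds ?_)
  simpa using q.lift_mem_futureCone

lemma exists_mem_segment_proj_mem_frontier {K : Set (KleinBall E)} {v w : ℝ × E}
    (hv : v ∈ futureCone E) (hw : w ∈ futureCone E) (hvK : proj v ∈ K) (hwK : proj w ∉ K) :
    ∃ u ∈ segment ℝ v w, proj u ∈ frontier K := by
  have : PreconnectedSpace (segment ℝ v w) :=
    isPreconnected_iff_preconnectedSpace.1 (convex_segment v w).isPreconnected
  have hsub : segment ℝ v w ⊆ futureCone E := (futureCone E).convex.segment_subset hv hw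
  have hcont : Continuous ((segment ℝ v w).domRestrict proj) :=
    ContinuousOn.domRestrict fun u hu => (continuousAt_proj (hsub hu)).continuousWithinAt
  obtain ⟨u, hu⟩ := (nonempty_frontier_iff (s := (segment ℝ v w).domRestrict proj ⁻¹' K)).2
    ⟨⟨⟨v, left_mem_segment ℝ v w⟩, hvK⟩,
      (Set.ne_univ_iff_exists_notMem _).2 ⟨⟨w, right_mem_segment ℝ v w⟩, hwK⟩⟩
  exact ⟨u, u.2, hcont.frontier_preimage_subset K hu⟩

/-- If points in direction `e` from `q` lie in `K` and points in direction `f` do not, then there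
are frontier points of `K` arbitrarily close to `q` in intermediate directions. -/
lemma exists_mem_frontier_smul_lift_eq {K : Set (KleinBall E)} {q : KleinBall E} {e f : ℝ × E}
    (he : ∀ᶠ t in 𝓝[>] (0 : ℝ), proj (lift q + t • e) ∈ K)
    (hf : ∀ᶠ t in 𝓝[>] (0 : ℝ), proj (lift q + t • f) ∉ K)
    {P : KleinBall E → Prop} (hP : ∀ᶠ r in 𝓝 q, P r) :
    ∃ r ∈ frontier K, P r ∧ ∃ k t : ℝ, 0 < t ∧
      ∃ d ∈ segment ℝ e f, k • lift r = lift q + t • d := by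
  have hproj : Filter.Tendsto proj (𝓝 (lift q)) (𝓝 q) := by
    simpa only [proj_lift] using (continuousAt_proj q.lift_mem_futureCone).tendsto
  obtain ⟨ε, hε, hball⟩ := Metric.eventually_nhds_iff_ball.1
    ((isOpen_futureCone.eventually_mem q.lift_mem_futureCone).and (hproj.eventually hP))
  have hray (d : ℝ × E) : ∀ᶠ t in 𝓝[>] (0 : ℝ), lift q + t • d ∈ Metric.ball (lift q) ε := by
    have hcont : Continuous fun t : ℝ => lift q + t • d := by fun_prop
    refine hcont.continuousWithinAt.eventually_mem ?_
    simpa using Metric.ball_mem_nhds (lift q) hε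
  obtain ⟨t, ⟨⟨hte, hteK⟩, htf, htfK⟩, ht⟩ := ((((hray e).and he).and ((hray f).and hf)).and
    (self_mem_nhdsWithin (s := Set.Ioi 0))).exists
  obtain ⟨v, hv, hr⟩ :=
    exists_mem_segment_proj_mem_frontier (hball _ hte).1 (hball _ htf).1 hteK htfK
  obtain ⟨hfuture, hPv⟩ := hball v ((convex_ball _ ε).segment_subset hte htf hv)
  obtain ⟨a, b, ha, hb, hab, rfl⟩ := hv
  refine ⟨_, hr, hPv, _, t, ht, a • e + b • f, ⟨a, b, ha, hb, hab, rfl⟩,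
    (sqrt_smul_lift_proj hfuture).trans ?_⟩
  calc a • (lift q + t • e) + b • (lift q + t • f)
      = (a + b) • lift q + t • (a • e + b • f) := by module
    _ = lift q + t • (a • e + b • f) := by rw [hab, one_smul]

lemma lt_coshDist_of_smul_lift_eq {q r y : KleinBall E} {k t C : ℝ} {e : ℝ × E} (hC : 0 ≤ C)
    (ht : 0 < t) (h : k • lift r = lift q + t • e) (hyr : coshDist y r = C)
    (he : 0 < ⟪C • lift r - lift y, e⟫ₘ) : C < coshDist y q := by
  have hpair (x : KleinBall E) : k * coshDist x r = coshDist x q + t * ⟪lift x, e⟫ₘ := by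
    simpa [minkowski_lift] using congrArg (fun v => ⟪lift x, v⟫ₘ) h
  have hr := hpair r
  have hy := hpair y
  rw [coshDist_self, mul_one] at hr
  rw [hyr] at hy
  rw [map_sub, map_smul, LinearMap.sub_apply, LinearMap.smul_apply, smul_eq_mul] at he
  have hk : 1 + t * ⟪lift r, e⟫ₘ ≤ k := hr ▸ add_le_add_left (one_le_coshDist r q) _
  linarith [mul_le_mul_of_nonneg_right hk hC, mul_pos ht he]

lemma IsAdmissible.proj_add_smul_sub_notMem {C : ℝ} {K : Set (KleinBall E)}
    (hK : IsAdmissible C K) {q p x : KleinBall E} (hp : p ∈ opposites C K q)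
    (hx : x ∈ opposites C K q) (hpx : p ≠ x) {t : ℝ} (ht : 0 < t)
    (hfuture : lift q + t • (lift p - lift x) ∈ futureCone E) :
    proj (lift q + t • (lift p - lift x)) ∉ K := by
  intro hmem
  have hlt : 1 < coshDist p x := one_lt_coshDist hpx
  set v : ℝ × E := lift q + t • (lift p - lift x) with hv
  have hself : ⟪v, v⟫ₘ = 1 + 2 * t ^ 2 * (1 - coshDist p x) := by
    simp only [hv, map_add, map_sub, map_smul, LinearMap.add_apply, LinearMap.sub_apply,
      LinearMap.smul_apply, minkowski_lift, coshDist_self, coshDist_comm p q, coshDist_comm x q,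
      coshDist_comm x p, hp.2, hx.2, smul_eq_mul]
    ring
  have hsqrt : √⟪v, v⟫ₘ ≤ 1 := by
    refine Real.sqrt_le_iff.2 ⟨zero_le_one, ?_⟩
    rw [hself]
    nlinarith [sq_nonneg t]
  have hpair : √⟪v, v⟫ₘ * coshDist x (proj v) = C + t * (coshDist p x - 1) := by
    rw [sqrt_mul_coshDist_proj hfuture, hv, map_add, map_smul, map_sub, minkowski_lift,
      minkowski_lift, minkowski_lift, coshDist_self, coshDist_comm x q, coshDist_comm x p, hx.2,
      smul_eq_mul]
  have hle : √⟪v, v⟫ₘ * coshDist x (proj v) ≤ C :=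
    (mul_le_of_le_one_left (coshDist_pos _ _).le hsqrt).trans (hK.coshDist_le hx.1 hmem)
  linarith [mul_pos ht (sub_pos.2 hlt)]

namespace IsExtremal

variable [FiniteDimensional ℝ E] [MeasurableSpace E] [BorelSpace E] {μ : Measure E}
  [μ.IsAddHaarMeasure] {C : ℝ} {K : Set (KleinBall E)}

lemma eventually_proj_add_smul_mem (hK : IsExtremal μ C K) {q o : KleinBall E} (hq : q ∈ K)
    (ho : o ∈ K) : ∀ᶠ t in 𝓝[>] (0 : ℝ), proj (lift q + t • lift o) ∈ K := by
  filter_upwards [eventually_lift_add_smul_mem_futureCone q (lift o), self_mem_nhdsWithin]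
    with t hv ht
  refine hK.mem_of_smul_lift_eq (Real.sqrt_pos.2 (minkowski_pos hv hv)) zero_le_one
    (le_of_lt ht) ?_ hq ho
  rw [sqrt_smul_lift_proj hv, one_smul]

/-- Suppose that `x` is an opposite point of `q` other than `p = s q`. Between a ray from `q` into
the interior of `K` and the ray in direction `lift p - lift x`, which leaves `K`, there are frontier
points `r` arbitrarily close to `q`; but `s r` is near `p`, hence too far away from `q`. -/
lemma eq_of_continuousAt_mem_opposites (hK : IsExtremal μ C K) (hC : 1 < C)
    {s : KleinBall E → KleinBall E} {q x : KleinBall E} (hq : q ∈ frontier K)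
    (hs : ContinuousAt s q) (hopp : ∀ᶠ r in 𝓝 q, r ∈ frontier K → s r ∈ opposites C K r)
    (hx : x ∈ opposites C K q) : x = s q := by
  by_contra hne
  have hqK : q ∈ K := hK.isCompact.isClosed.frontier_subset hq
  have hp : s q ∈ opposites C K q := hopp.self_of_nhds hq
  have hpx : 1 < coshDist (s q) x := one_lt_coshDist (Ne.symm hne)
  obtain ⟨o, ho⟩ := hK.interior_nonempty
  have hpo : coshDist (s q) o < C := hK.toIsAdmissible.coshDist_lt_of_mem_interior hC hp.1 ho
  have hinner : ∀ᶠ t in 𝓝[>] (0 : ℝ), proj (lift q + t • lift o) ∈ K :=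
    hK.eventually_proj_add_smul_mem hqK (interior_subset ho)
  have houter : ∀ᶠ t in 𝓝[>] (0 : ℝ), proj (lift q + t • (lift (s q) - lift x)) ∉ K := by
    filter_upwards [eventually_lift_add_smul_mem_futureCone q _, self_mem_nhdsWithin] with t hv ht
    exact hK.proj_add_smul_sub_notMem hp hx (Ne.symm hne) ht hv
  have hgain (e : ℝ × E) (he : 0 < ⟪C • lift q - lift (s q), e⟫ₘ) :
      ∀ᶠ r in 𝓝 q, 0 < ⟪C • lift r - lift (s r), e⟫ₘ := by
    have hcont : Continuous fun z : KleinBall E × KleinBall E => ⟪C • lift z.1 - lift z.2, e⟫ₘ := by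
      fun_prop
    exact (hcont.continuousAt.comp (f := fun r => (r, s r))
      (continuousAt_id.prodMk hs)).eventually_const_lt he
  have hgain_inner : 0 < ⟪C • lift q - lift (s q), lift o⟫ₘ := by
    simp only [map_sub, map_smul, LinearMap.sub_apply, LinearMap.smul_apply, smul_eq_mul,
      minkowski_lift]
    nlinarith [one_le_coshDist q o]
  have hgain_outer : 0 < ⟪C • lift q - lift (s q), lift (s q) - lift x⟫ₘ := by
    simp only [map_sub, map_smul, LinearMap.sub_apply, LinearMap.smul_apply, smul_eq_mul,
      minkowski_lift, coshDist_self, hp.2, hx.2]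
    linarith
  obtain ⟨r, hr, ⟨hsr, hgain_o, hgain_x⟩, k, t, ht, d, hd, hkr⟩ :=
    exists_mem_frontier_smul_lift_eq hinner houter
      (hopp.and ((hgain _ hgain_inner).and (hgain _ hgain_outer)))
  have hgain_d : 0 < ⟪C • lift r - lift (s r), d⟫ₘ :=
    ((convex_Ioi 0).linear_preimage (minkowski (C • lift r - lift (s r)))).segment_subset
      hgain_o hgain_x hd
  refine (hK.coshDist_le (hsr hr).1 hqK).not_gt (lt_coshDist_of_smul_lift_eq
    (zero_le_one.trans hC.le) ht hkr ?_ hgain_d)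
  exact (coshDist_comm _ _).trans (hsr hr).2

end IsExtremal

/-! ### The centre -/

section Farthest

variable {o p u z : KleinBall E} {α β α' β' C : ℝ}

/-- The point `v` of the sphere about `o` through `p` in the direction from `o` away from `u` is at
least as far from `u` as `p` is. The triangle inequality then forces `lift p = v`. -/
lemma lift_sub_add_smul_lift_sub_eq_zero {k : ℝ} (hk : 0 ≤ k)
    (hk_sq : k ^ 2 * (coshDist o u ^ 2 - 1) = coshDist o p ^ 2 - 1)
    (h : ∀ z, coshDist o z = coshDist o p → coshDist u z ≤ coshDist u p) :
    (lift p - coshDist o p • lift o) + k • (lift u - coshDist o u • lift o) = 0 := by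
  set v : ℝ × E := coshDist o p • lift o - k • (lift u - coshDist o u • lift o) with hv
  set w : ℝ × E := (lift p - coshDist o p • lift o) + k • (lift u - coshDist o u • lift o) with hw
  have hov : ⟪lift o, v⟫ₘ = coshDist o p := by
    simp only [hv, map_sub, map_smul, minkowski_lift, coshDist_self, smul_eq_mul]
    ring
  have hself : ⟪v, v⟫ₘ = 1 := by
    simp only [hv, map_sub, map_smul, LinearMap.sub_apply, LinearMap.smul_apply, minkowski_lift,
      coshDist_self, coshDist_comm u o, smul_eq_mul]
    linear_combination -hk_sq
  have hfuture : v ∈ futureCone E := mem_futureCone_of_minkowski_pos o.lift_mem_futureCone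
    (hself ▸ one_pos) (hov ▸ coshDist_pos o p)
  have huv : ⟪lift u, v⟫ₘ = coshDist o p * coshDist o u + k * (coshDist o u ^ 2 - 1) := by
    simp only [hv, map_sub, map_smul, minkowski_lift, coshDist_self, coshDist_comm u o, smul_eq_mul]
    ring
  have hfar : ⟪lift u, v⟫ₘ ≤ coshDist u p := by
    rw [← lift_proj hfuture hself, minkowski_lift] at hov ⊢
    exact h _ hov
  have how : ⟪lift o, w⟫ₘ = 0 := by
    simp only [hw, map_sub, map_add, map_smul, minkowski_lift, coshDist_self, smul_eq_mul]
    ring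
  have hww : ⟪w, w⟫ₘ = 2 * k * (coshDist u p - ⟪lift u, v⟫ₘ) := by
    simp only [huv, hw, map_sub, map_add, map_smul, LinearMap.sub_apply, LinearMap.add_apply,
      LinearMap.smul_apply, minkowski_lift, coshDist_self, coshDist_comm u o, coshDist_comm p o,
      coshDist_comm p u, smul_eq_mul]
    linear_combination hk_sq
  exact eq_zero_of_minkowski_eq_zero o.lift_mem_futureCone how
    (hww ▸ mul_nonneg (mul_nonneg zero_le_two hk) (sub_nonneg.2 hfar))

lemma exists_lift_eq_of_forall_coshDist_le
    (h : ∀ z, coshDist o z = coshDist o p → coshDist u z ≤ coshDist u p) :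
    ∃ α β : ℝ, 0 ≤ α ∧ 0 ≤ β ∧ lift o = α • lift p + β • lift u := by
  rcases eq_or_ne o u with rfl | hou
  · exact ⟨0, 1, le_rfl, zero_le_one, by module⟩
  have hd : 1 < coshDist o u := one_lt_coshDist hou
  have hd_sq : 0 < coshDist o u ^ 2 - 1 := by nlinarith
  have hc : 0 ≤ coshDist o p ^ 2 - 1 := by nlinarith [one_le_coshDist o p]
  obtain ⟨k, hk, hk_sq⟩ : ∃ k : ℝ, 0 ≤ k ∧
      k ^ 2 * (coshDist o u ^ 2 - 1) = coshDist o p ^ 2 - 1 :=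
    ⟨√((coshDist o p ^ 2 - 1) / (coshDist o u ^ 2 - 1)), Real.sqrt_nonneg _, by
      rw [Real.sq_sqrt (div_nonneg hc hd_sq.le), div_mul_cancel₀ _ hd_sq.ne']⟩
  have hzero := lift_sub_add_smul_lift_sub_eq_zero hk hk_sq h
  have hpos : 0 < coshDist o p + k * coshDist o u :=
    add_pos_of_pos_of_nonneg (coshDist_pos o p) (mul_nonneg hk (coshDist_pos o u).le)
  refine ⟨(coshDist o p + k * coshDist o u)⁻¹, (coshDist o p + k * coshDist o u)⁻¹ * k,
    by positivity, by positivity, ?_⟩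
  rw [mul_smul, ← smul_add, eq_inv_smul_iff₀ hpos.ne']
  linear_combination (norm := module) (-1 : ℝ) • hzero

lemma eq_of_lift_eq (hop : o ≠ p) (hC : 1 < C) (hu : coshDist p u = C) (hz : coshDist p z = C)
    (hβ : 0 ≤ β) (hou : lift o = α • lift p + β • lift u)
    (hβ' : 0 ≤ β') (hoz : lift o = α' • lift p + β' • lift z) : u = z := by
  have hpos {x : KleinBall E} {a b : ℝ} (hb : 0 ≤ b) (h : lift o = a • lift p + b • lift x) :
      0 < b := by
    refine hb.lt_of_ne' fun hb₀ => hop ?_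
    have hmul := mul_coshDist_of_smul_lift_eq ((one_smul ℝ (lift o)).trans h)
    have ho := hmul o
    have hp := hmul p
    rw [hb₀, coshDist_self] at ho hp
    refine coshDist_eq_one_iff.1 ?_
    rw [coshDist_comm p o] at hp
    nlinarith [one_le_coshDist o p]
  have hle {x y : KleinBall E} {a b a' b' : ℝ} (hx : coshDist p x = C) (hy : coshDist p y = C)
      (hb : 0 ≤ b) (h : lift o = a • lift p + b • lift x)
      (hb' : 0 ≤ b') (h' : lift o = a' • lift p + b' • lift y) : a ≤ a' := by
    by_contra! hlt
    refine (coshDist_lt_of_smul_lift_eq (x := p) (hpos hb' h') (sub_pos.2 hlt) hb ?_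
      (by rwa [coshDist_self]) hx.le).ne hy
    rw [sub_smul, sub_add_eq_add_sub, ← h, h', add_sub_cancel_left]
  have hα : α = α' := (hle hu hz hβ hou hβ' hoz).antisymm (hle hz hu hβ' hoz hβ hou)
  have hsmul : β • lift u = β' • lift z := add_left_cancel ((hou.symm.trans hoz).trans (by rw [hα]))
  rw [← proj_lift u, ← proj_smul (hpos hβ hou), hsmul, proj_smul (hpos hβ' hoz), proj_lift]

end Farthest

lemma mem_of_coshDist_eq_of_forall_frontier_le {K : Set (KleinBall E)} (hK : IsClosed K)
    {o p z : KleinBall E} (ho : o ∈ interior K) (hp : p ∈ frontier K)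
    (hmin : ∀ r ∈ frontier K, coshDist o p ≤ coshDist o r) (hz : coshDist o z = coshDist o p) :
    z ∈ K := by
  by_contra hzK
  obtain ⟨v, hv, hr⟩ := exists_mem_segment_proj_mem_frontier o.lift_mem_futureCone
    z.lift_mem_futureCone (by rw [proj_lift]; exact interior_subset ho) (by rwa [proj_lift])
  have hfuture : v ∈ futureCone E := (futureCone E).convex.segment_subset o.lift_mem_futureCone
    z.lift_mem_futureCone hv
  obtain ⟨a, b, ha, hb, hab, rfl⟩ := hv
  rcases ha.eq_or_lt with rfl | ha
  · rw [zero_add] at hab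
    rw [hab, zero_smul, one_smul, zero_add, proj_lift] at hr
    exact hzK (hK.frontier_subset hr)
  · have hop : o ≠ p := by
      rintro rfl
      exact hp.2 ho
    refine (coshDist_lt_of_smul_lift_eq (Real.sqrt_pos.2 (minkowski_pos hfuture hfuture)) ha hb
      (sqrt_smul_lift_proj hfuture) ?_ hz.le).not_ge (hmin _ hr)
    rw [coshDist_self]
    exact one_lt_coshDist hop

namespace IsExtremal

variable [FiniteDimensional ℝ E] [MeasurableSpace E] [BorelSpace E] {μ : Measure E}
  [μ.IsAddHaarMeasure] {C : ℝ} {K : Set (KleinBall E)}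

lemma exists_opposites_eq_singleton (hK : IsExtremal μ C K) (hC : 1 < C)
    (hne : (frontier K).Nonempty) : ∃ p ∈ frontier K, ∃ q, opposites C K p = {q} := by
  have hclosed : IsClosed K := hK.isCompact.isClosed
  obtain ⟨o, ho⟩ := hK.interior_nonempty
  obtain ⟨p, hp, hmin⟩ := (hK.isCompact.of_isClosed_subset isClosed_frontier
    hclosed.frontier_subset).exists_isMinOn hne (f := fun r => coshDist o r)
    (by fun_prop : Continuous fun r => coshDist o r).continuousOn
  have hop : o ≠ p := by
    rintro rfl
    exact hp.2 ho
  have hbetween (u : KleinBall E) (hu : u ∈ opposites C K p) :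
      ∃ α β : ℝ, 0 ≤ α ∧ 0 ≤ β ∧ lift o = α • lift p + β • lift u := by
    refine exists_lift_eq_of_forall_coshDist_le fun z hz => ?_
    rw [coshDist_comm u p, hu.2]
    exact hK.coshDist_le hu.1 (mem_of_coshDist_eq_of_forall_frontier_le hclosed ho hp hmin hz)
  obtain ⟨q, hq⟩ := hK.exists_mem_opposites hp
  refine ⟨p, hp, q, Set.eq_singleton_iff_unique_mem.2 ⟨hq, fun u hu => ?_⟩⟩
  obtain ⟨α, β, -, hβ, hαβ⟩ := hbetween u hu
  obtain ⟨α', β', -, hβ', hαβ'⟩ := hbetween q hq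
  exact eq_of_lift_eq hop hC hu.2 hq.2 hβ hαβ hβ' hαβ'

lemma opposites_eq_singleton_reflection (hK : IsExtremal μ C K) (hC : 1 < C)
    {p q r : KleinBall E} (hp : p ∈ frontier K) (hpq : opposites C K p = {q})
    (hr : r ∈ frontier K) (hpr : p ≠ r) : opposites C K r = {reflection p r q} := by
  have hmem (x : KleinBall E) (hx : x ∈ frontier K) : reflection p x q ∈ opposites C K x := by
    obtain ⟨u, hu, hux⟩ := hK.exists_reflection_mem_opposites hp hx
    rw [hpq, Set.mem_singleton_iff] at hu
    exact hu ▸ hux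
  refine Set.eq_singleton_iff_unique_mem.2 ⟨hmem r hr, fun u hu => ?_⟩
  exact hK.eq_of_continuousAt_mem_opposites (s := fun x => reflection p x q) hC hr
    ((continuousAt_reflection hpr).comp (f := fun x => (x, q)) (by fun_prop))
    (Filter.Eventually.of_forall hmem) hu

/-- The unique opposite point of `r` is both the reflection of `q` that maps `p` to `r` and the
reflection of `p` that maps `q` to `r`. -/
lemma coshDist_add_coshDist_eq (hK : IsExtremal μ C K) (hC : 1 < C) {p q r : KleinBall E}
    (hp : p ∈ frontier K) (hpq : opposites C K p = {q}) (hr : r ∈ frontier K) :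
    coshDist r p + coshDist r q = C + 1 := by
  have hq : q ∈ opposites C K p := hpq ▸ Set.mem_singleton q
  have hpK : p ∈ K := hK.isCompact.isClosed.frontier_subset hp
  have hrK : r ∈ K := hK.isCompact.isClosed.frontier_subset hr
  rcases eq_or_ne p r with rfl | hpr
  · rw [coshDist_self, hq.2, add_comm]
  rcases eq_or_ne q r with rfl | hqr
  · rw [coshDist_self, coshDist_comm, hq.2]
  have hqp : opposites C K q = {p} := by
    have hne : p ≠ q := fun h => hC.ne (by rw [← hq.2, ← h, coshDist_self])
    simpa using hK.opposites_eq_singleton_reflection hC hp hpq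
      (hK.mem_frontier_of_mem_opposites hC hpK hq) hne
  have heq : reflection p r q = reflection q r p := Set.singleton_injective <|
    (hK.opposites_eq_singleton_reflection hC hp hpq hr hpr).symm.trans
      (hK.opposites_eq_singleton_reflection hC
        (hK.mem_frontier_of_mem_opposites hC hpK hq) hqp hr hqr)
  have hreflect : coshDist q (reflection p r q) = coshDist r p := by
    rw [heq, coshDist_reflection_comm, reflection_left]
  rw [coshDist_reflection, coshDist_self, coshDist_comm q p, hq.2, coshDist_comm q r,
    coshDist_comm p r] at hreflect
  have hpr' : 0 < coshDist r p - 1 := sub_pos.2 (one_lt_coshDist hpr.symm)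
  have hsq : (C - coshDist r q) ^ 2 = (coshDist r p - 1) ^ 2 := by
    rw [← eq_sub_iff_add_eq', div_eq_iff hpr'.ne'] at hreflect
    linear_combination hreflect
  have hrq : coshDist r q ≤ C := hK.coshDist_le hrK hq.1
  linarith [(sq_eq_sq₀ (sub_nonneg.2 hrq) hpr'.le).1 hsq]

lemma exists_forall_frontier_coshDist_eq {c : ℝ} (hK : IsExtremal μ (2 * c ^ 2 - 1) K)
    (hc : 1 < c) : ∃ m, ∀ r ∈ frontier K, coshDist r m = c := by
  rcases (frontier K).eq_empty_or_nonempty with hempty | hne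
  · exact ⟨origin E, by simp [hempty]⟩
  have hC : 1 < 2 * c ^ 2 - 1 := by nlinarith
  obtain ⟨p, hp, q, hpq⟩ := hK.exists_opposites_eq_singleton hC hne
  have hq : q ∈ opposites (2 * c ^ 2 - 1) K p := hpq ▸ Set.mem_singleton q
  have hfuture : lift p + lift q ∈ futureCone E :=
    (futureCone E).add_mem p.lift_mem_futureCone q.lift_mem_futureCone
  have hsqrt : √⟪lift p + lift q, lift p + lift q⟫ₘ = 2 * c := by
    rw [Real.sqrt_eq_iff_mul_self_eq_of_pos (by linarith)]
    simp only [map_add, LinearMap.add_apply, minkowski_lift, coshDist_self, coshDist_comm q p, hq.2]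
    ring
  refine ⟨proj (lift p + lift q), fun r hr => ?_⟩
  have hmid := sqrt_mul_coshDist_proj hfuture r
  rw [hsqrt, map_add, minkowski_lift, minkowski_lift,
    hK.coshDist_add_coshDist_eq hC hp hpq hr] at hmid
  nlinarith

lemma exists_eq_coshBall {c : ℝ} (hK : IsExtremal μ (2 * c ^ 2 - 1) K) (hc : 1 < c) :
    ∃ m, K = coshBall m c := by
  obtain ⟨m, hm⟩ := hK.exists_forall_frontier_coshDist_eq hc
  have hsub : K ⊆ coshBall m c := by
    obtain ⟨u, hu, hmax⟩ := hK.isCompact.exists_isMaxOn hK.nonempty (f := fun y => coshDist m y)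
      (by fun_prop : Continuous fun y => coshDist m y).continuousOn
    have hmu : coshDist m u ≤ c := by
      rcases eq_or_ne m u with rfl | hne
      · rw [coshDist_self]
        exact hc.le
      · rw [coshDist_comm]
        exact (hm u (mem_frontier_of_forall_coshDist_le hne hu hmax)).le
    exact fun y hy => (coshDist_comm y m).trans_le ((hmax hy).trans hmu)
  exact ⟨m, hsub.antisymm fun z hz => hK.mem_of_forall_coshDist_le fun y hy =>
    coshDist_le_of_mem_coshBall hz (hsub hy)⟩

end IsExtremal

/-! ### Existence of extremal sets -/

lemma isAdmissible_coshBall [FiniteDimensional ℝ E] (m : KleinBall E) (c : ℝ) :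
    IsAdmissible (2 * c ^ 2 - 1) (coshBall m c) where
  isCompact := isCompact_coshBall m c
  coshDist_le _ hy _ hz := coshDist_le_of_mem_coshBall hy hz

lemma isAdmissible_closure [FiniteDimensional ℝ E] {C : ℝ} {X : Set (KleinBall E)}
    (h : ∀ x ∈ X, ∀ y ∈ X, coshDist x y ≤ C) : IsAdmissible C (closure X) where
  isCompact := by
    rcases X.eq_empty_or_nonempty with rfl | ⟨x, hx⟩
    · simp
    · exact (isCompact_coshBall x C).of_isClosed_subset isClosed_closure
        (closure_minimal (fun y hy => h y hy x hx) (isClosed_coshBall x C))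
  coshDist_le x hx y hy := by
    have hcont : Continuous (Function.uncurry (coshDist (E := E))) :=
      continuous_coshDist continuous_fst continuous_snd
    exact isClosed_Iic.closure_subset (map_mem_closure₂ hcont hx hy h)

section Existence

variable [MeasurableSpace E] [BorelSpace E] (μ : Measure E) [μ.IsAddHaarMeasure]

lemma kleinVolume_coshBall_pos (m : KleinBall E) {c : ℝ} (hc : 1 < c) :
    0 < kleinVolume μ (coshBall m c) := by
  have hopen : IsOpen {y : KleinBall E | coshDist y m < c} :=
    isOpen_lt (by fun_prop) continuous_const
  exact (hopen.measure_pos (kleinVolume μ) ⟨m, by simpa using hc⟩).trans_le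
    (measure_mono fun y (hy : coshDist y m < c) => hy.le)

variable [FiniteDimensional ℝ E]

/-- After a reflection, a nonempty admissible set contains the origin; the admissible sets
containing the origin lie in a fixed ball, so they form a compact space on which the volume is
upper semicontinuous. -/
lemma exists_isAdmissible_forall_volume_le (C : ℝ) :
    ∃ K : Set (KleinBall E), IsAdmissible C K ∧
      ∀ L, IsAdmissible C L → kleinVolume μ L ≤ kleinVolume μ K := by
  let T : Set (TopologicalSpace.Compacts (KleinBall E)) :=
    {K | (K : Set (KleinBall E)) ⊆ coshBall (origin E) C} ∩
      {K | ((K ×ˢ K : TopologicalSpace.Compacts _) : Set (KleinBall E × KleinBall E)) ⊆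
        {z | coshDist z.1 z.2 ≤ C}}
  have hclosed : IsClosed {z : KleinBall E × KleinBall E | coshDist z.1 z.2 ≤ C} :=
    isClosed_le (by fun_prop) continuous_const
  have hT : IsCompact T :=
    (TopologicalSpace.Compacts.isCompact_subsets_of_isCompact (isCompact_coshBall _ C)).inter_right
      ((TopologicalSpace.Compacts.isClosed_subsets_of_isClosed hclosed).preimage
        (TopologicalSpace.Compacts.continuous_prod.comp (continuous_id.prodMk continuous_id)))
  have hne : T.Nonempty := ⟨⊥, by simp [T]⟩
  obtain ⟨K, hK, hmax⟩ := ((upperSemicontinuous_measure_compacts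
    (kleinVolume μ)).upperSemicontinuousOn T).exists_isMaxOn hne hT
  refine ⟨K, ⟨K.isCompact, fun x hx y hy => Set.prod_subset_iff.1 hK.2 x hx y hy⟩, fun L hL => ?_⟩
  rcases L.eq_empty_or_nonempty with rfl | ⟨x, hx⟩
  · simp
  set L' := reflection (origin E) x ⁻¹' L
  have hL' : IsAdmissible C L' := hL.preimage_reflection _ _
  have horigin : origin E ∈ L' := by rwa [Set.mem_preimage, reflection_left]
  rw [← (measurePreserving_reflection μ (origin E) x).measure_preimage
    hL.isCompact.measurableSet.nullMeasurableSet]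
  exact hmax (a := ⟨L', hL'.isCompact⟩) ⟨fun y hy => hL'.coshDist_le hy horigin,
    fun z hz => hL'.coshDist_le hz.1 hz.2⟩

lemma isExtremal_coshBall (m : KleinBall E) {c : ℝ} (hc : 1 < c) :
    IsExtremal μ (2 * c ^ 2 - 1) (coshBall m c) := by
  obtain ⟨K, hK, hmax⟩ := exists_isAdmissible_forall_volume_le μ (2 * c ^ 2 - 1)
  have hext : IsExtremal μ (2 * c ^ 2 - 1) K :=
    ⟨hK, (kleinVolume_coshBall_pos μ m hc).trans_le (hmax _ (isAdmissible_coshBall m c)), hmax⟩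
  obtain ⟨m', rfl⟩ := hext.exists_eq_coshBall hc
  simpa only [preimage_reflection_coshBall, reflection_left] using hext.preimage_reflection m' m

theorem exists_closure_eq_coshBall {X : Set (KleinBall E)} {c : ℝ} (hc : 1 < c)
    (hX : ∀ x ∈ X, ∀ y ∈ X, coshDist x y ≤ 2 * c ^ 2 - 1) {m : KleinBall E}
    (hvol : kleinVolume μ (coshBall m c) ≤ kleinVolume μ X) :
    ∃ z, closure X = coshBall z c :=
  ((isExtremal_coshBall μ m hc).of_volume_le (isAdmissible_closure hX)
    (hvol.trans (measure_mono subset_closure))).exists_eq_coshBall hc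

end Existence

/-! ### Euclidean coordinates -/

section EuclideanSpace

variable {n : ℕ} {x y : KleinBall (Fsp n)} {D : ℝ}

lemma hypDist_coe (x y : KleinBall (Fsp n)) :
    hypDist (x : Fsp n) y = Real.arcosh (coshDist x y) := by
  rw [hypDist, Real.sqrt_mul x.one_sub_norm_sq_pos.le]
  rfl

lemma hypDist_le_iff (hD : 0 ≤ D) : hypDist (x : Fsp n) y ≤ D ↔ coshDist x y ≤ Real.cosh D := by
  rw [hypDist_coe, ← Real.arcosh_le_arcosh (coshDist_pos x y) (Real.cosh_pos D),
    Real.arcosh_cosh hD]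

lemma inv_factor_pow (x : KleinBall (Fsp n)) (d : ℕ) :
    (factor x)⁻¹ ^ (d + 1) = (1 - ‖(x : Fsp n)‖ ^ 2) ^ (-(((d : ℝ) + 1) / 2)) := by
  rw [factor, inv_pow, Real.rpow_neg x.one_sub_norm_sq_pos.le, Real.sqrt_eq_rpow,
    ← Real.rpow_mul_natCast x.one_sub_norm_sq_pos.le, one_div_mul_eq_div, Nat.cast_succ]

lemma kleinVolume_volume_apply (A : Set (KleinBall (Fsp n))) :
    kleinVolume volume A = hypVol n ((↑) '' A) := by
  have hcoe := (isOpenEmbedding_coe (E := Fsp n)).measurableEmbedding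
  suffices h : kleinVolume volume = (hypVol n).comap ((↑) : KleinBall (Fsp n) → Fsp n) by
    rw [h, hcoe.comap_apply]
  refine Measure.ext fun B hB => ?_
  rw [hcoe.comap_apply, hypVol, withDensity_apply _ (hcoe.measurableSet_image.2 hB),
    ← setLIntegral_subtype Metric.isOpen_ball.measurableSet, kleinVolume, withDensity_apply _ hB]
  simp only [inv_factor_pow, finrank_euclideanSpace_fin]

lemma image_coe_coshBall_cosh (hD : 0 ≤ D) (m : KleinBall (Fsp n)) :
    (↑) '' coshBall m (Real.cosh D) = {y : Fsp n | ‖y‖ < 1 ∧ hypDist y m ≤ D} := by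
  ext y
  constructor
  · rintro ⟨y, hy, rfl⟩
    exact ⟨y.norm_lt_one, (hypDist_le_iff hD).2 hy⟩
  · rintro ⟨hy, hym⟩
    exact ⟨⟨y, mem_ball_zero_iff.2 hy⟩, (hypDist_le_iff hD).1 hym, rfl⟩

end EuclideanSpace

end KleinBall

open KleinBall in
theorem hyperbolic_isodiametric_equality_general (n : ℕ) (D : ℝ) (hD : 0 < D) (X : Set (Fsp n))
    (hX : ∀ x ∈ X, ‖x‖ < 1) (hdiam : ∀ x ∈ X, ∀ y ∈ X, hypDist x y ≤ D)
    (hvol : hypVol n {x : Fsp n | ‖x‖ ≤ Real.tanh (D / 2)} ≤ hypVol n X) :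
    ∃ z : Fsp n, ‖z‖ < 1 ∧
      closure X = {y : Fsp n | ‖y‖ < 1 ∧ hypDist y z ≤ D / 2} := by
  obtain ⟨Y, rfl⟩ : ∃ Y : Set (KleinBall (Fsp n)), (↑) '' Y = X :=
    Set.subset_range_iff_exists_image_eq.1 fun x hx => ⟨⟨x, mem_ball_zero_iff.2 (hX x hx)⟩, rfl⟩
  have hcosh : Real.cosh D = 2 * Real.cosh (D / 2) ^ 2 - 1 := by
    rw [← mul_div_cancel₀ D two_ne_zero, Real.cosh_two_mul, Real.sinh_sq]
    ring_nf
  have hc : 1 < Real.cosh (D / 2) := Real.one_lt_cosh.2 (half_pos hD).ne'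
  have hY : ∀ x ∈ Y, ∀ y ∈ Y, coshDist x y ≤ 2 * Real.cosh (D / 2) ^ 2 - 1 := fun x hx y hy =>
    hcosh ▸ (hypDist_le_iff hD.le).1 (hdiam _ ⟨x, hx, rfl⟩ _ ⟨y, hy, rfl⟩)
  have hvolY : kleinVolume volume (coshBall (origin (Fsp n)) (Real.cosh (D / 2))) ≤
      kleinVolume volume Y := by
    rw [kleinVolume_volume_apply, kleinVolume_volume_apply, coshBall_origin_cosh (half_pos hD).le]
    exact (measure_mono (by rintro _ ⟨x, hx, rfl⟩; exact hx)).trans hvol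
  obtain ⟨z, hz⟩ := exists_closure_eq_coshBall volume hc hY hvolY
  refine ⟨z, z.norm_lt_one, ?_⟩
  rw [← image_coe_coshBall_cosh (half_pos hD).le, ← hz, image_closure_of_isCompact
    (hz ▸ isCompact_coshBall z _) continuous_subtype_val.continuousOn]

/-- equality case of the hyperbolic isodiametric inequality (Klein model). -/
theorem hyperbolic_isodiametric_equality (n : ℕ) (hn : 2 ≤ n) (D : ℝ) (hD : 0 < D)
    (X : Set (Fsp n)) (hX : ∀ x ∈ X, ‖x‖ < 1) (hXm : MeasurableSet X)
    (hdiam : ∀ x ∈ X, ∀ y ∈ X, hypDist x y ≤ D)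
    (hvol : hypVol n X = hypVol n {x : Fsp n | ‖x‖ ≤ Real.tanh (D / 2)}) :
    ∃ z : Fsp n, ‖z‖ < 1 ∧
      closure X = {y : Fsp n | ‖y‖ < 1 ∧ hypDist y z ≤ D / 2} := by
  exact hyperbolic_isodiametric_equality_general n D hD X hX hdiam hvol.ge
end
end

section
/- Let n ≥ 2 and let C ⊆ S^n be solid. Then the strongly regular boundary points of C are dense in ∂C: for every z ∈ ∂C and every ε > 0 there exists a strongly regular boundary point y ∈ ∂C with d(y,z) < ε. -/
/-!
Take `p` in the interior of `C` close to `z`, and let `y` be a point of `∂C` nearest to `p`, at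
distance `r ≤ d(z,p)`. The ball `B(p,r)` lies in `C`: a point `x ∉ C` of that ball is not antipodal
to `p`, and the minimizing geodesic from `p` to `x`, which is the radial projection of the straight
segment, would cross `∂C` before reaching `x`, hence strictly closer to `p` than `r`. So `y` is
strongly regular, and it is close to `z` by the triangle inequality.
-/

open MeasureTheory

noncomputable section

/-- Euclidean space `ℝ^{n+1}`. -/
abbrev Esp (n : ℕ) : Type := EuclideanSpace ℝ (Fin (n + 1))

/-- The unit sphere `S^n ⊆ ℝ^{n+1}`, as a subtype. -/
abbrev Sph (n : ℕ) : Type := Metric.sphere (0 : Esp n) 1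

/-- Geodesic distance `d(x,y) = arccos ⟨x,y⟩` on the sphere. -/
def gd {n : ℕ} (x y : Sph n) : ℝ :=
  Real.arccos (inner (𝕜 := ℝ) (x : Esp n) (y : Esp n))

/-- Closed geodesic ball `B(z,r) = {x ∈ Sⁿ : d(x,z) ≤ r}`. -/
def sphBall {n : ℕ} (z : Sph n) (r : ℝ) : Set (Sph n) := {x | gd x z ≤ r}

/-- Geodesic diameter `diam X = sup {d(x,y) : x, y ∈ X}`. -/
def sphDiam {n : ℕ} (X : Set (Sph n)) : ℝ :=
  sSup {r | ∃ x ∈ X, ∃ y ∈ X, r = gd x y}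

/-- Spherical volume: the `n`-dimensional (Hausdorff) surface measure on `S^n`. -/
def sphVol (n : ℕ) : Measure (Sph n) := μH[(n : ℝ)]

/-- A nonempty compact set `C ⊆ S^n`, `C ≠ S^n`, is solid if it equals the closure
of its interior (in the topology of `S^n`). -/
def Solid {n : ℕ} (C : Set (Sph n)) : Prop :=
  C.Nonempty ∧ IsCompact C ∧ C ≠ Set.univ ∧ C = closure (interior C)

/-- `x` is a strongly regular boundary point of `C`: `x ∈ ∂C` and there are `r > 0`
and `z ∈ C` with `B(z,r) ⊆ C` and `d(x,z) = r`. -/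
def StronglyRegular {n : ℕ} (C : Set (Sph n)) (x : Sph n) : Prop :=
  x ∈ frontier C ∧ ∃ r > 0, ∃ z ∈ C, sphBall z r ⊆ C ∧ gd x z = r

open InnerProductGeometry

lemma linearIndependent_pair_of_norm_eq {E : Type*} [NormedAddCommGroup E] [NormedSpace ℝ E]
    [StrictConvexSpace ℝ E] {x y : E} (h : ‖x‖ = ‖y‖) (hne : x ≠ y) (hneg : x ≠ -y) :
    LinearIndependent ℝ ![x, y] := by
  by_contra hdep
  rcases sameRay_or_sameRay_neg_iff_not_linearIndependent.2 hdep with hray | hray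
  · exact hne ((sameRay_iff_of_norm_eq h).1 hray)
  · exact hneg ((sameRay_iff_of_norm_eq (h.trans (norm_neg y).symm)).1 hray)

section InnerProductSpace

variable {E : Type*} [NormedAddCommGroup E] [InnerProductSpace ℝ E]

lemma angle_smul_add_smul_lt {p x : E} (h : LinearIndependent ℝ ![p, x]) {a b : ℝ}
    (ha : 0 < a) (hb : 0 ≤ b) : angle (a • p + b • x) p < angle x p := by
  have coeff_eq_zero := LinearIndependent.pair_iff.1 h
  have hv : a • p + b • x ≠ 0 := fun h0 => ha.ne' (coeff_eq_zero a b h0).1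
  have hspan : a • p + b • x ∈ Submodule.span NNReal {x, p} :=
    Submodule.mem_span_pair.2 ⟨⟨b, hb⟩, ⟨a, ha.le⟩, add_comm _ _⟩
  have hadd : angle x p = angle x (a • p + b • x) + angle (a • p + b • x) p :=
    angle_eq_angle_add_add_angle_add_of_mem_span hv hspan
  have hangle : angle x (a • p + b • x) ≠ 0 := by
    intro h0
    obtain ⟨-, r, -, hr⟩ := angle_eq_zero_iff.1 h0
    exact ha.ne' (coeff_eq_zero a (b - r) (by rw [sub_smul, ← hr]; abel)).1
  linarith [(angle_nonneg x (a • p + b • x)).lt_of_ne' hangle]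

lemma exists_path_sphere_angle_lt {p x : Metric.sphere (0 : E) 1} (hne : x ≠ p) (hneg : x ≠ -p) :
    ∃ γ : Path p x, ∀ t < 1, angle (γ t : E) p < angle (x : E) p := by
  have hli : LinearIndependent ℝ ![(p : E), x] :=
    linearIndependent_pair_of_norm_eq (by simp) (fun h => hne (Subtype.ext h.symm))
      fun h => hneg (Subtype.ext (by simp [h]))
  let v : unitInterval → E := fun t => (1 - (t : ℝ)) • (p : E) + (t : ℝ) • (x : E)
  have hv : Continuous v := by fun_prop
  have hv0 : ∀ t, v t ≠ 0 := by
    intro t h0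
    obtain ⟨h1, h2⟩ := LinearIndependent.pair_iff.1 hli _ _ h0
    linarith
  have hnormalize : Continuous fun t => NormedSpace.normalize (v t) :=
    (hv.norm.inv₀ fun t => norm_ne_zero_iff.2 (hv0 t)).smul hv
  have hmem : ∀ t, NormedSpace.normalize (v t) ∈ Metric.sphere (0 : E) 1 := by
    simp [hv0]
  let γ : Path p x :=
    { toFun := fun t => ⟨NormedSpace.normalize (v t), hmem t⟩
      continuous_toFun := hnormalize.subtype_mk hmem
      source' := Subtype.ext (by simp [v, NormedSpace.normalize])
      target' := Subtype.ext (by simp [v, NormedSpace.normalize]) }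
  refine ⟨γ, fun t ht => ?_⟩
  calc angle (γ t : E) p = angle (v t) p := angle_normalize_left _ _
    _ < angle (x : E) p := angle_smul_add_smul_lt hli (sub_pos.2 ht) t.2.1

end InnerProductSpace

lemma exists_lt_one_path_mem_frontier {X : Type*} [TopologicalSpace X] {C : Set X}
    (hC : IsClosed C) {p x : X} (hp : p ∈ C) (hx : x ∉ C) (γ : Path p x) :
    ∃ t < 1, γ t ∈ frontier C := by
  obtain ⟨t, ht⟩ : (frontier (γ ⁻¹' C)).Nonempty :=
    nonempty_frontier_iff.2 ⟨⟨0, by simpa using hp⟩, fun huniv =>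
      hx (by simpa using huniv.ge (Set.mem_univ 1))⟩
  have hγt : γ t ∈ frontier C := γ.continuous.frontier_preimage_subset C ht
  refine ⟨t, unitInterval.lt_one_iff_ne_one.2 ?_, hγt⟩
  rintro rfl
  exact hx (by simpa using hC.frontier_subset hγt)

section GeodesicDistance

variable {n : ℕ}

lemma gd_eq_angle (x y : Sph n) : gd x y = angle (x : Esp n) (y : Esp n) := by
  simp [gd, angle]

lemma gd_self (x : Sph n) : gd x x = 0 := by
  simp [gd]

lemma gd_comm (x y : Sph n) : gd x y = gd y x := by
  simp only [gd_eq_angle, angle_comm]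

lemma gd_triangle (x y z : Sph n) : gd x z ≤ gd x y + gd y z := by
  simp only [gd_eq_angle, angle_le_angle_add_angle]

lemma gd_pos {x y : Sph n} (h : x ≠ y) : 0 < gd x y := by
  rw [gd_eq_angle]
  exact (angle_nonneg _ _).lt_of_ne' fun h0 =>
    h (Subtype.ext (eq_of_angle_eq_zero_of_norm_eq h0 (by simp)))

lemma gd_neg_self (x : Sph n) : gd (-x) x = Real.pi := by
  simp [gd]

lemma continuous_gd_left (p : Sph n) : Continuous fun x : Sph n => gd x p := by
  unfold gd
  fun_prop

end GeodesicDistance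

section NearestBoundaryPoint

variable {n : ℕ} {C : Set (Sph n)}

lemma exists_mem_frontier_gd_lt (hC : IsClosed C) {p x : Sph n} (hp : p ∈ C) (hx : x ∉ C)
    (hxp : gd x p < Real.pi) : ∃ w ∈ frontier C, gd w p < gd x p := by
  have hne : x ≠ p := fun h => hx (h ▸ hp)
  have hneg : x ≠ -p := fun h => hxp.ne (h ▸ gd_neg_self p)
  obtain ⟨γ, hγ⟩ := exists_path_sphere_angle_lt hne hneg
  obtain ⟨t, ht, hγt⟩ := exists_lt_one_path_mem_frontier hC hp hx γ
  exact ⟨γ t, hγt, by simpa only [gd_eq_angle] using hγ t ht⟩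

lemma sphBall_subset_of_isMinOn_frontier (hC : IsClosed C) {p y : Sph n} (hp : p ∈ C)
    (hmin : IsMinOn (gd · p) (frontier C) y) (hyp : gd y p < Real.pi) :
    sphBall p (gd y p) ⊆ C := by
  intro x (hx : gd x p ≤ gd y p)
  by_contra hxC
  obtain ⟨w, hw, hwx⟩ := exists_mem_frontier_gd_lt hC hp hxC (hx.trans_lt hyp)
  exact ((hmin hw).trans_lt hwx).not_ge hx

lemma stronglyRegular_of_isMinOn_frontier (hC : IsClosed C) {p y : Sph n} (hp : p ∈ interior C)
    (hy : y ∈ frontier C) (hmin : IsMinOn (gd · p) (frontier C) y) (hyp : gd y p < Real.pi) :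
    StronglyRegular C y :=
  have hpC := interior_subset hp
  have hne : y ≠ p := fun h => hy.2 (h ▸ hp)
  ⟨hy, gd y p, gd_pos hne, p, hpC, sphBall_subset_of_isMinOn_frontier hC hpC hmin hyp, rfl⟩

end NearestBoundaryPoint

theorem stronglyRegular_dense_general {n : ℕ} {C : Set (Sph n)} (hC : IsClosed C) {z : Sph n}
    (hz : z ∈ frontier C) (hzC : z ∈ closure (interior C)) {ε : ℝ} (hε : 0 < ε) :
    ∃ y : Sph n, StronglyRegular C y ∧ gd y z < ε := by
  have hδ : 0 < min (ε / 2) Real.pi := lt_min (half_pos hε) Real.pi_pos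
  have hnear : ∀ᶠ p in nhds z, gd p z < min (ε / 2) Real.pi :=
    (continuous_gd_left z).tendsto z |>.eventually_lt_const (by rwa [gd_self])
  obtain ⟨p, hp, hpz⟩ := ((mem_closure_iff_frequently.1 hzC).and_eventually hnear).exists
  obtain ⟨hpz_half, hpz_pi⟩ := lt_min_iff.1 hpz
  obtain ⟨y, hy, hmin⟩ := isClosed_frontier.isCompact.exists_isMinOn ⟨z, hz⟩
    (continuous_gd_left p).continuousOn
  have hyp : gd y p ≤ gd p z := gd_comm z p ▸ hmin hz
  refine ⟨y, stronglyRegular_of_isMinOn_frontier hC hp hy hmin (hyp.trans_lt hpz_pi), ?_⟩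
  calc gd y z ≤ gd y p + gd p z := gd_triangle y p z
    _ < ε := by linarith

/-- strongly regular boundary points are dense in the boundary of a solid set. -/
theorem stronglyRegular_dense (n : ℕ) (hn : 2 ≤ n) (C : Set (Sph n)) (hC : Solid C)
    (z : Sph n) (hz : z ∈ frontier C) (ε : ℝ) (hε : 0 < ε) :
    ∃ y : Sph n, StronglyRegular C y ∧ gd y z < ε := by
  have hzC : z ∈ closure (interior C) := hC.2.2.2 ▸ hC.2.1.isClosed.frontier_subset hz
  exact stronglyRegular_dense_general hC.2.1.isClosed hz hzC hε
end
end

section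
/- Let n ≥ 2 and let C ⊆ S^n be solid. Suppose there exist p ∈ ℝ^{n+1} and t ∈ ℝ with |t| < ‖p‖ such that every strongly regular boundary point x of C satisfies ⟨p,x⟩ = t. Then C is a closed geodesic ball: there exist z ∈ S^n and r ∈ (0,π) with C = B(z,r). -/
/-!
Let `x ∈ ∂C`. Near `x` there is an interior point `y` of `C`, and the point of the closure of `Cᶜ`
nearest to `y` is a strongly regular boundary point which is at most twice as far from `x` as `y`
is. So the strongly regular points are dense in `∂C`, and `∂C` lies in the hyperplane `⟪p, x⟫ = t`.
The hyperplane cuts the sphere into two open caps. They are connected and miss `∂C`, so each of them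
lies in `C` or misses `C`; as their union is dense and `C` is the closure of its interior, exactly
one of them lies in `C`, and `C` is its closure.

Closed caps, geodesic balls and balls for the Euclidean distance are the same sets, so the nearest
points can be taken for the Euclidean distance. Stereographic projection maps a cap to a ball of a
vector space, whence caps are connected and an open cap is dense in the closed one.
-/

open MeasureTheory

noncomputable section

open Metric Set
open scoped RealInnerProductSpace

section RegularClosed

variable {X : Type*} [TopologicalSpace X] {C U V : Set X}

theorem subset_or_disjoint_of_disjoint_frontier (hU : IsPreconnected U)
    (hUC : Disjoint U (frontier C)) : U ⊆ C ∨ Disjoint U C := by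
  have hcover : U ⊆ interior C ∪ (closure C)ᶜ := fun x hx => by
    by_contra h
    rw [mem_union, not_or, mem_compl_iff, not_not] at h
    exact hUC.notMem_of_mem_left hx ⟨h.2, h.1⟩
  have hdisj : Disjoint (interior C) (closure C)ᶜ :=
    disjoint_compl_right_iff_subset.2 (interior_subset.trans subset_closure)
  refine (hU.subset_or_subset isOpen_interior isClosed_closure.isOpen_compl hdisj hcover).imp
    (fun h => h.trans interior_subset) fun h => ?_
  exact (disjoint_compl_left_iff_subset.2 subset_closure).mono_left h

theorem eq_closure_of_subset_of_disjoint (hC : C = closure (interior C)) (hUV : Dense (U ∪ V))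
    (hU : U ⊆ C) (hV : Disjoint V C) : C = closure U := by
  have hclosed : IsClosed C := hC ▸ isClosed_closure
  refine Subset.antisymm ?_ (closure_minimal hU hclosed)
  have hinter : interior C ∩ (U ∪ V) ⊆ U := fun x ⟨hxC, hx⟩ =>
    hx.resolve_right fun hxV => hV.notMem_of_mem_left hxV (interior_subset hxC)
  calc C = closure (interior C) := hC
    _ ⊆ closure (interior C ∩ (U ∪ V)) :=
      closure_minimal (hUV.open_subset_closure_inter isOpen_interior) isClosed_closure
    _ ⊆ closure U := closure_mono hinter

theorem eq_closure_or_eq_closure_of_disjoint_frontier (hC : C = closure (interior C))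
    (hne : C.Nonempty) (huniv : C ≠ univ) (hU : IsPreconnected U) (hV : IsPreconnected V)
    (hUV : Dense (U ∪ V)) (hUC : Disjoint U (frontier C)) (hVC : Disjoint V (frontier C)) :
    C = closure U ∨ C = closure V := by
  have hclosed : IsClosed C := hC ▸ isClosed_closure
  rcases subset_or_disjoint_of_disjoint_frontier hU hUC with hU | hU <;>
    rcases subset_or_disjoint_of_disjoint_frontier hV hVC with hV | hV
  · have : univ ⊆ C := hUV.closure_eq ▸ closure_minimal (union_subset hU hV) hclosed
    exact absurd (univ_subset_iff.1 this) huniv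
  · exact .inl (eq_closure_of_subset_of_disjoint hC hUV hU hV)
  · exact .inr (eq_closure_of_subset_of_disjoint hC (union_comm U V ▸ hUV) hV hU)
  · have hint : (interior C).Nonempty := closure_nonempty_iff.1 (hC ▸ hne)
    obtain ⟨x, hxC, hx⟩ := hUV.inter_open_nonempty _ isOpen_interior hint
    exact absurd (interior_subset hxC) ((hU.union_left hV).notMem_of_mem_left hx)

end RegularClosed

section TouchingBalls

variable {X : Type*} [PseudoMetricSpace X] [ProperSpace X] {C : Set X} {x y : X}

theorem exists_mem_frontier_closedBall_subset (hC : IsClosed C) (hx : x ∈ closure Cᶜ)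
    (hy : y ∈ interior C)
    (hball : ∀ r, 0 < r → r ≤ dist x y → closedBall y r ⊆ closure (ball y r)) :
    ∃ w ∈ frontier C, 0 < dist w y ∧ dist w y ≤ dist x y ∧ closedBall y (dist w y) ⊆ C := by
  obtain ⟨w, hw, hmin⟩ := isClosed_closure.exists_infDist_eq_dist ⟨x, hx⟩ y
  rw [dist_comm] at hmin
  have hle : dist w y ≤ dist x y := by
    rw [← hmin, dist_comm]
    exact infDist_le_dist_of_mem hx
  have hpos : 0 < dist w y := by
    rw [← hmin, ← isClosed_closure.notMem_iff_infDist_pos ⟨x, hx⟩, closure_compl, notMem_compl_iff]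
    exact hy
  have hsub : closedBall y (dist w y) ⊆ C := by
    refine (hball _ hpos hle).trans (closure_minimal ?_ hC)
    rw [← hmin, infDist_closure]
    exact ball_infDist_compl_subset
  refine ⟨w, ?_, hpos, hle, hsub⟩
  rw [frontier_eq_closure_inter_closure]
  exact ⟨subset_closure (hsub (mem_closedBall.2 le_rfl)), hw⟩

theorem frontier_subset_closure_touching {δ : ℝ} (hδ : 0 < δ)
    (hball : ∀ y : X, ∀ r, 0 < r → r < δ → closedBall y r ⊆ closure (ball y r))
    (hC : C = closure (interior C)) :
    frontier C ⊆
      closure {w ∈ frontier C | ∃ y ∈ C, 0 < dist w y ∧ closedBall y (dist w y) ⊆ C} := by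
  intro x hx
  have hclosed : IsClosed C := hC ▸ isClosed_closure
  rw [Metric.mem_closure_iff]
  intro ε hε
  have hxint : x ∈ closure (interior C) := hC ▸ hclosed.frontier_subset hx
  obtain ⟨y, hy, hxy⟩ := Metric.mem_closure_iff.1 hxint (min (ε / 2) δ) (by positivity)
  have hxcompl : x ∈ closure Cᶜ := by
    rw [closure_compl]
    exact hx.2
  obtain ⟨w, hw, hpos, hle, hsub⟩ := exists_mem_frontier_closedBall_subset hclosed hxcompl hy
    fun r hr hrx => hball y r hr (hrx.trans_lt (hxy.trans_le (min_le_right _ _)))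
  refine ⟨w, ⟨hw, y, interior_subset hy, hpos, hsub⟩, ?_⟩
  calc dist x w ≤ dist x y + dist w y := dist_triangle_right x w y
    _ ≤ dist x y + dist x y := by gcongr
    _ < ε := by linarith [hxy.trans_le (min_le_left _ _)]

end TouchingBalls

section Caps

variable {E : Type*} [NormedAddCommGroup E] [InnerProductSpace ℝ E]

/-- The open spherical cap of centre `z` cut out of the unit sphere by the half-space
`c < ⟪·, z⟫`. -/
def openCap (z : sphere (0 : E) 1) (c : ℝ) : Set (sphere (0 : E) 1) := {x | c < ⟪(x : E), z⟫}

/-- The closed spherical cap of centre `z` cut out of the unit sphere by the half-space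
`c ≤ ⟪·, z⟫`. -/
def closedCap (z : sphere (0 : E) 1) (c : ℝ) : Set (sphere (0 : E) 1) := {x | c ≤ ⟪(x : E), z⟫}

variable {x z : sphere (0 : E) 1} {c r : ℝ}

theorem mem_openCap : x ∈ openCap z c ↔ c < ⟪(x : E), z⟫ := Iff.rfl

theorem mem_closedCap : x ∈ closedCap z c ↔ c ≤ ⟪(x : E), z⟫ := Iff.rfl

theorem isClosed_closedCap (z : sphere (0 : E) 1) (c : ℝ) : IsClosed (closedCap z c) :=
  isClosed_le continuous_const (by fun_prop)

theorem openCap_subset_closedCap (z : sphere (0 : E) 1) (c : ℝ) : openCap z c ⊆ closedCap z c :=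
  fun _ hx => (mem_openCap.1 hx).le

theorem closedCap_union_closedCap_neg (z : sphere (0 : E) 1) (c : ℝ) :
    closedCap z c ∪ closedCap (-z) (-c) = univ :=
  eq_univ_of_forall fun x => by simpa [mem_closedCap] using le_total c ⟪(x : E), z⟫

/-- The inverse of the stereographic projection from the pole `-z`; it maps `0` to `z`. -/
def invStereo (z : sphere (0 : E) 1) : (ℝ ∙ ((-z : sphere (0 : E) 1) : E))ᗮ → sphere (0 : E) 1 :=
  stereoInvFun (norm_eq_of_mem_sphere (-z))

theorem inner_neg_sphere_self (z : sphere (0 : E) 1) :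
    ⟪((-z : sphere (0 : E) 1) : E), z⟫ = -1 := by
  simp

theorem continuous_invStereo (z : sphere (0 : E) 1) : Continuous (invStereo z) :=
  continuous_stereoInvFun _

theorem inner_invStereo (z : sphere (0 : E) 1) (w : (ℝ ∙ ((-z : sphere (0 : E) 1) : E))ᗮ) :
    ⟪(invStereo z w : E), z⟫ = (4 - ‖w‖ ^ 2) / (4 + ‖w‖ ^ 2) := by
  have hwz : ⟪(w : E), z⟫ = 0 := by
    simpa using Submodule.mem_orthogonal_singleton_iff_inner_left.1 w.2
  rw [invStereo, stereoInvFun_apply, real_inner_smul_left, inner_add_left, real_inner_smul_left,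
    real_inner_smul_left, hwz, inner_neg_sphere_self]
  ring

theorem mem_range_invStereo (h : x ≠ -z) : x ∈ range (invStereo z) :=
  ⟨_, stereo_left_inv _ (Subtype.coe_injective.ne h)⟩

theorem closedCap_subset_range_invStereo (z : sphere (0 : E) 1) (hc : -1 < c) :
    closedCap z c ⊆ range (invStereo z) := by
  refine fun x hx => mem_range_invStereo ?_
  rintro rfl
  rw [mem_closedCap, inner_neg_sphere_self] at hx
  linarith

/-- The radius is the solution `R` of `c = (4 - R ^ 2) / (4 + R ^ 2)`. -/
theorem image_ball_invStereo (z : sphere (0 : E) 1) (hc : -1 < c) :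
    invStereo z '' ball 0 √(4 * (1 - c) / (1 + c)) = openCap z c := by
  have hpre : invStereo z ⁻¹' openCap z c = ball 0 √(4 * (1 - c) / (1 + c)) := by
    ext w
    rw [mem_preimage, mem_openCap, inner_invStereo, lt_div_iff₀ (by positivity),
      mem_ball_zero_iff, Real.lt_sqrt (norm_nonneg w), lt_div_iff₀ (by linarith)]
    constructor <;> intro h <;> linarith
  rw [← hpre, image_preimage_eq_of_subset
    ((openCap_subset_closedCap z c).trans (closedCap_subset_range_invStereo z hc))]

theorem image_closedBall_invStereo (z : sphere (0 : E) 1) (hc : -1 < c) (hc' : c ≤ 1) :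
    invStereo z '' closedBall 0 √(4 * (1 - c) / (1 + c)) = closedCap z c := by
  have hR : 0 ≤ 4 * (1 - c) / (1 + c) := div_nonneg (by linarith) (by linarith)
  have hpre : invStereo z ⁻¹' closedCap z c = closedBall 0 √(4 * (1 - c) / (1 + c)) := by
    ext w
    rw [mem_preimage, mem_closedCap, inner_invStereo, le_div_iff₀ (by positivity),
      mem_closedBall_zero_iff, Real.le_sqrt (norm_nonneg w) hR, le_div_iff₀ (by linarith)]
    constructor <;> intro h <;> linarith
  rw [← hpre, image_preimage_eq_of_subset (closedCap_subset_range_invStereo z hc)]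

theorem isPreconnected_openCap (z : sphere (0 : E) 1) (hc : -1 < c) :
    IsPreconnected (openCap z c) := by
  rw [← image_ball_invStereo z hc]
  exact (convex_ball _ _).isPreconnected.image _ (continuous_invStereo z).continuousOn

theorem closure_openCap (z : sphere (0 : E) 1) (hc : -1 < c) (hc' : c < 1) :
    closure (openCap z c) = closedCap z c := by
  refine (closure_minimal (openCap_subset_closedCap z c) (isClosed_closedCap z c)).antisymm ?_
  have hR : 0 < 4 * (1 - c) / (1 + c) := div_pos (by linarith) (by linarith)
  rw [← image_ball_invStereo z hc, ← image_closedBall_invStereo z hc hc'.le,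
    ← closure_ball _ (Real.sqrt_pos.2 hR).ne']
  exact image_closure_subset_closure_image (continuous_invStereo z)

theorem dense_openCap_union_openCap_neg (z : sphere (0 : E) 1) (hc : -1 < c)
    (hc' : c < 1) : Dense (openCap z c ∪ openCap (-z) (-c)) := by
  rw [dense_iff_closure_eq, closure_union, closure_openCap z hc hc',
    closure_openCap (-z) (by linarith) (by linarith), closedCap_union_closedCap_neg]

theorem eq_closedCap_or_eq_closedCap_neg {C : Set (sphere (0 : E) 1)}
    (hC : C = closure (interior C)) (hne : C.Nonempty) (huniv : C ≠ univ) (hc : -1 < c)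
    (hc' : c < 1) (hfr : frontier C ⊆ {x | ⟪(x : E), z⟫ = c}) :
    C = closedCap z c ∨ C = closedCap (-z) (-c) := by
  rw [← closure_openCap z hc hc', ← closure_openCap (-z) (by linarith) (by linarith)]
  refine eq_closure_or_eq_closure_of_disjoint_frontier hC hne huniv (isPreconnected_openCap z hc)
    (isPreconnected_openCap (-z) (by linarith)) (dense_openCap_union_openCap_neg z hc hc') ?_ ?_
  · exact disjoint_left.2 fun x (hx : c < ⟪(x : E), z⟫) hxC => hx.ne' (hfr hxC)
  · refine disjoint_left.2 fun x (hx : -c < ⟪(x : E), -z⟫) hxC => hx.ne' ?_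
    rw [inner_neg_right, show ⟪(x : E), z⟫ = c from hfr hxC]

theorem sq_dist_eq_inner (x y : sphere (0 : E) 1) : dist x y ^ 2 = 2 - 2 * ⟪(x : E), y⟫ := by
  rw [Subtype.dist_eq, dist_eq_norm, norm_sub_sq_real, norm_eq_of_mem_sphere, norm_eq_of_mem_sphere]
  ring

theorem ball_eq_openCap (z : sphere (0 : E) 1) (hr : 0 ≤ r) :
    ball z r = openCap z (1 - r ^ 2 / 2) := by
  ext x
  rw [mem_ball, ← sq_lt_sq₀ dist_nonneg hr, sq_dist_eq_inner, mem_openCap]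
  constructor <;> intro h <;> linarith

theorem closedBall_eq_closedCap (z : sphere (0 : E) 1) (hr : 0 ≤ r) :
    closedBall z r = closedCap z (1 - r ^ 2 / 2) := by
  ext x
  rw [mem_closedBall, ← sq_le_sq₀ dist_nonneg hr, sq_dist_eq_inner, mem_closedCap]
  constructor <;> intro h <;> linarith

theorem closure_ball_sphere (z : sphere (0 : E) 1) (hr : 0 < r) (hr' : r < 2) :
    closure (ball z r) = closedBall z r := by
  rw [ball_eq_openCap z hr.le, closedBall_eq_closedCap z hr.le,
    closure_openCap z (by nlinarith) (by nlinarith)]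

end Caps

section GeodesicBalls

variable {E : Type*} [NormedAddCommGroup E] [InnerProductSpace ℝ E]

/-- The geodesic distance `arccos ⟪x, y⟫` on the unit sphere of a real inner product space;
`gd` is the case of `ℝ^{n+1}`. -/
def geodesicDist (x y : sphere (0 : E) 1) : ℝ := Real.arccos ⟪(x : E), y⟫

/-- The closed geodesic ball on the unit sphere of a real inner product space; `sphBall` is the
case of `ℝ^{n+1}`. -/
def geodesicBall (z : sphere (0 : E) 1) (r : ℝ) : Set (sphere (0 : E) 1) :=
  {x | geodesicDist x z ≤ r}

/-- Strong regularity of a boundary point on the unit sphere of a real inner product space. The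
radius of the inner ball does not occur, as it is the geodesic distance of `x` to the centre. -/
def IsStronglyRegular (C : Set (sphere (0 : E) 1)) (x : sphere (0 : E) 1) : Prop :=
  x ∈ frontier C ∧
    ∃ z ∈ C, 0 < geodesicDist x z ∧ geodesicBall z (geodesicDist x z) ⊆ C

variable {x y z : sphere (0 : E) 1} {c r : ℝ}

theorem mem_geodesicBall : x ∈ geodesicBall z r ↔ geodesicDist x z ≤ r := Iff.rfl

theorem cos_geodesicDist (x y : sphere (0 : E) 1) : Real.cos (geodesicDist x y) = ⟪(x : E), y⟫ := by
  have h := abs_le.1 (abs_real_inner_le_norm (x : E) y)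
  rw [norm_eq_of_mem_sphere, norm_eq_of_mem_sphere, mul_one] at h
  exact Real.cos_arccos h.1 h.2

theorem geodesicDist_mem_Icc (x y : sphere (0 : E) 1) : geodesicDist x y ∈ Icc 0 Real.pi :=
  ⟨Real.arccos_nonneg _, Real.arccos_le_pi _⟩

theorem geodesicDist_pos (h : 0 < dist x y) : 0 < geodesicDist x y := by
  refine Real.arccos_pos.2 ?_
  have := sq_dist_eq_inner x y
  nlinarith

theorem geodesicBall_eq_closedCap (z : sphere (0 : E) 1) (hr : r ∈ Icc 0 Real.pi) :
    geodesicBall z r = closedCap z (Real.cos r) := by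
  ext x
  rw [mem_geodesicBall, mem_closedCap, ← cos_geodesicDist,
    Real.strictAntiOn_cos.le_iff_ge hr (geodesicDist_mem_Icc x z)]

theorem geodesicBall_geodesicDist_eq_closedBall (x z : sphere (0 : E) 1) :
    geodesicBall z (geodesicDist x z) = closedBall z (dist x z) := by
  rw [geodesicBall_eq_closedCap z (geodesicDist_mem_Icc x z), cos_geodesicDist,
    closedBall_eq_closedCap z dist_nonneg, sq_dist_eq_inner]
  congr 1
  ring

theorem exists_closedCap_eq_geodesicBall (z : sphere (0 : E) 1) (hc : -1 < c) (hc' : c < 1) :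
    ∃ r, 0 < r ∧ r < Real.pi ∧ closedCap z c = geodesicBall z r := by
  have hmem : Real.arccos c ∈ Icc 0 Real.pi := ⟨Real.arccos_nonneg c, Real.arccos_le_pi c⟩
  refine ⟨Real.arccos c, Real.arccos_pos.2 hc', hmem.2.lt_of_ne fun h => ?_, ?_⟩
  · exact hc.not_ge (Real.arccos_eq_pi.1 h)
  · rw [geodesicBall_eq_closedCap z hmem, Real.cos_arccos hc.le hc'.le]

end GeodesicBalls

section RegularPoints

variable {E : Type*} [NormedAddCommGroup E] [InnerProductSpace ℝ E] [FiniteDimensional ℝ E]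
  {C : Set (sphere (0 : E) 1)}

theorem frontier_subset_of_stronglyRegular {F : Set (sphere (0 : E) 1)} (hF : IsClosed F)
    (hC : C = closure (interior C))
    (hreg : ∀ x, IsStronglyRegular C x → x ∈ F) : frontier C ⊆ F := by
  refine (frontier_subset_closure_touching two_pos
    (fun y r hr hr' => (closure_ball_sphere y hr hr').ge) hC).trans (closure_minimal ?_ hF)
  rintro x ⟨hx, z, hz, hpos, hball⟩
  exact hreg x ⟨hx, z, hz, geodesicDist_pos hpos,
    (geodesicBall_geodesicDist_eq_closedBall x z).trans_subset hball⟩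

theorem solid_with_regular_points_on_sphere_cap_is_ball_general (hne : C.Nonempty)
    (huniv : C ≠ univ) (hC : C = closure (interior C)) {p : E} {t : ℝ} (hpt : |t| < ‖p‖)
    (hreg : ∀ x, IsStronglyRegular C x → ⟪p, (x : E)⟫ = t) :
    ∃ z : sphere (0 : E) 1, ∃ r : ℝ, 0 < r ∧ r < Real.pi ∧ C = geodesicBall z r := by
  have hp : 0 < ‖p‖ := (abs_nonneg t).trans_lt hpt
  obtain ⟨hc, hc'⟩ : -1 < t / ‖p‖ ∧ t / ‖p‖ < 1 := by
    rwa [← abs_lt, abs_div, abs_norm, div_lt_one hp]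
  let z : sphere (0 : E) 1 := ⟨‖p‖⁻¹ • p, by simp [norm_smul, hp.ne']⟩
  have hfr : frontier C ⊆ {x | ⟪(x : E), z⟫ = t / ‖p‖} := by
    refine frontier_subset_of_stronglyRegular (isClosed_eq (by fun_prop) continuous_const) hC
      fun x hx => ?_
    rw [mem_ofPred_eq, real_inner_smul_right, real_inner_comm, hreg x hx, inv_mul_eq_div]
  rcases eq_closedCap_or_eq_closedCap_neg hC hne huniv hc hc' hfr with hcap | hcap
  · exact ⟨z, hcap ▸ exists_closedCap_eq_geodesicBall z hc hc'⟩
  · exact ⟨-z, hcap ▸ exists_closedCap_eq_geodesicBall (-z) (by linarith) (by linarith)⟩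

end RegularPoints

/-- if all strongly regular boundary points of a solid set lie in a fixed
hyperplane section `{x : ⟨p,x⟩ = t}` with `|t| < ‖p‖`, then the set is a closed geodesic ball. -/
theorem solid_with_regular_points_on_sphere_cap_is_ball (n : ℕ) (hn : 2 ≤ n)
    (C : Set (Sph n)) (hC : Solid C) (p : Esp n) (t : ℝ) (hpt : |t| < ‖p‖)
    (hreg : ∀ x : Sph n, StronglyRegular C x → inner (𝕜 := ℝ) p (x : Esp n) = t) :
    ∃ z : Sph n, ∃ r : ℝ, 0 < r ∧ r < Real.pi ∧ C = sphBall z r := by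
  obtain ⟨hne, -, huniv, hcl⟩ := hC
  exact solid_with_regular_points_on_sphere_cap_is_ball_general hne huniv hcl hpt
    fun x ⟨hx, z, hz, hpos, hball⟩ => hreg x ⟨hx, gd x z, hpos, z, hz, hball, rfl⟩
end
end

section
/- Let n ≥ 2 and 0 < D < π. Then there exists a D-maximal set; that is, there is a compact set C ⊆ S^n with diam C ≤ D such that σ(C) = sup{σ(X) : X ⊆ S^n compact, diam X ≤ D} (in particular this supremum is attained). -/
/-! The compact subsets of `S^n`, with the Vietoris topology, form a compact space. In it the sets
of geodesic diameter at most `D` form a closed subfamily, because `K ↦ K ×ˢ K` is continuous and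
the condition says that `K ×ˢ K` lies in the closed set `{(x, y) | d(x, y) ≤ D}`. The volume is an
upper semicontinuous function of the compact set: by outer regularity, a compact set `K` with
`σ(K) < b` has an open neighbourhood of volume less than `b`, which contains every compact set
close to `K`. An upper semicontinuous function on a nonempty compact space attains its maximum.

Outer regularity requires the `n`-dimensional Hausdorff measure on `S^n` to be locally finite.
This holds since the inverse of stereographic projection is locally Lipschitz and its domain is a
normed space of dimension `n`, on which that Hausdorff measure is a Haar measure. -/

open MeasureTheory

noncomputable section

/-- A set `C ⊆ S^n` is `D`-maximal: compact, of geodesic diameter at most `D`, and of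
maximal spherical volume among compact sets of diameter at most `D`. -/
def DMaximal (n : ℕ) (D : ℝ) (C : Set (Sph n)) : Prop :=
  IsCompact C ∧ sphDiam C ≤ D ∧
    sphVol n C =
      sSup {v | ∃ X : Set (Sph n), IsCompact X ∧ sphDiam X ≤ D ∧ v = sphVol n X}

open TopologicalSpace Topology

section CompactSubsets

variable {α : Type*} [TopologicalSpace α]

lemma isClosed_setOf_compacts_prod_self_subset {F : Set (α × α)} (hF : IsClosed F) :
    IsClosed {K : Compacts α | (K : Set α) ×ˢ (K : Set α) ⊆ F} :=
  (Compacts.isClosed_subsets_of_isClosed hF).preimage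
    (Compacts.continuous_prod.comp (continuous_id.prodMk continuous_id))

variable [MeasurableSpace α] (μ : Measure α) [μ.OuterRegular]

lemma upperSemicontinuous_measure_compacts_s7 :
    UpperSemicontinuous fun K : Compacts α => μ K := by
  intro K b hb
  obtain ⟨U, hKU, hU, hUb⟩ := (K : Set α).exists_isOpen_lt_of_lt b hb
  filter_upwards [(Compacts.isOpen_subsets_of_isOpen hU).mem_nhds hKU] with L hLU
  exact (measure_mono hLU).trans_lt hUb

lemma exists_isMaxOn_measure_compacts [CompactSpace α] {𝒦 : Set (Compacts α)}
    (hne : 𝒦.Nonempty) (h𝒦 : IsClosed 𝒦) :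
    ∃ C ∈ 𝒦, IsMaxOn (fun K : Compacts α => μ K) 𝒦 C :=
  ((upperSemicontinuous_measure_compacts_s7 μ).upperSemicontinuousOn 𝒦).exists_isMaxOn
    hne h𝒦.isCompact

end CompactSubsets

section HausdorffMeasure

lemma finiteAtFilter_map_nhds_hausdorffMeasure {V Y : Type*} [NormedAddCommGroup V]
    [NormedSpace ℝ V] [FiniteDimensional ℝ V] [EMetricSpace Y] [MeasurableSpace Y] [BorelSpace Y]
    {f : V → Y} {x : V} {K : NNReal} {t : Set V} (ht : t ∈ 𝓝 x) (hf : LipschitzOnWith K f t) :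
    (μH[Module.finrank ℝ V] : Measure Y).FiniteAtFilter ((𝓝 x).map f) := by
  borelize V
  obtain ⟨u, hu, hμu⟩ := (μH[Module.finrank ℝ V] : Measure V).finiteAt_nhds x
  refine ⟨f '' (t ∩ u), Filter.image_mem_map (Filter.inter_mem ht hu), ?_⟩
  calc μH[Module.finrank ℝ V] (f '' (t ∩ u))
      ≤ (K : ENNReal) ^ (Module.finrank ℝ V : ℝ) * μH[Module.finrank ℝ V] (t ∩ u) :=
        (hf.mono Set.inter_subset_left).hausdorffMeasure_image_le (Nat.cast_nonneg _)
    _ < ⊤ := ENNReal.mul_lt_top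
        (ENNReal.rpow_lt_top_of_nonneg (Nat.cast_nonneg _) ENNReal.coe_ne_top)
        ((measure_mono Set.inter_subset_right).trans_lt hμu)

variable {E : Type*} [NormedAddCommGroup E] [InnerProductSpace ℝ E]

lemma exists_lipschitzOnWith_stereographic_symm {v : E} (hv : ‖v‖ = 1) (w : (ℝ ∙ v)ᗮ) :
    ∃ K, ∃ t ∈ 𝓝 w, LipschitzOnWith K (stereographic hv).symm t := by
  have hsmooth : ContDiff ℝ 1 fun w : (ℝ ∙ v)ᗮ => stereoInvFunAux v (w : E) :=
    contDiff_stereoInvFunAux.comp (ℝ ∙ v)ᗮ.subtypeL.contDiff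
  exact hsmooth.contDiffAt.exists_lipschitzOnWith

lemma isLocallyFiniteMeasure_hausdorffMeasure_sphere [MeasurableSpace E] [BorelSpace E] (n : ℕ)
    [Fact (Module.finrank ℝ E = n + 1)] :
    IsLocallyFiniteMeasure (μH[n] : Measure (Metric.sphere (0 : E) 1)) := by
  refine ⟨fun x => ?_⟩
  have : FiniteDimensional ℝ E := .of_fact_finrank_eq_succ n
  have hv : ‖((-x : Metric.sphere (0 : E) 1) : E)‖ = 1 := norm_eq_of_mem_sphere (-x)
  have hx : x ∈ (stereographic hv).source := by
    rw [stereographic_source, Set.mem_compl_singleton_iff]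
    exact ne_neg_of_mem_unit_sphere ℝ x
  obtain ⟨K, t, ht, hK⟩ := exists_lipschitzOnWith_stereographic_symm hv (stereographic hv x)
  have hfin := finiteAtFilter_map_nhds_hausdorffMeasure ht hK
  rwa [(isOpenEmbedding_stereographic_symm hv).map_nhds_eq, (stereographic hv).left_inv hx,
    Submodule.finrank_orthogonal_span_singleton (n := n) (ne_zero_of_mem_unit_sphere (-x))] at hfin

end HausdorffMeasure

instance isLocallyFiniteMeasure_sphVol (n : ℕ) : IsLocallyFiniteMeasure (sphVol n) :=
  have : Fact (Module.finrank ℝ (Esp n) = n + 1) := ⟨finrank_euclideanSpace_fin⟩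
  isLocallyFiniteMeasure_hausdorffMeasure_sphere n

section GeodesicDiameter

variable {n : ℕ} {D : ℝ}

lemma continuous_gd : Continuous fun p : Sph n × Sph n => gd p.1 p.2 :=
  Real.continuous_arccos.comp (by fun_prop)

-- For empty `X` the supremum in `sphDiam X` takes the junk value `0`.
lemma sphDiam_le_iff (hD : 0 ≤ D) {X : Set (Sph n)} :
    sphDiam X ≤ D ↔ ∀ x ∈ X, ∀ y ∈ X, gd x y ≤ D := by
  constructor
  · intro h x hx y hy
    have hbdd : BddAbove {r | ∃ x ∈ X, ∃ y ∈ X, r = gd x y} := by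
      refine ⟨Real.pi, ?_⟩
      rintro r ⟨a, -, b, -, rfl⟩
      exact Real.arccos_le_pi _
    exact (le_csSup hbdd ⟨x, hx, y, hy, rfl⟩).trans h
  · intro h
    refine Real.sSup_le ?_ hD
    rintro r ⟨x, hx, y, hy, rfl⟩
    exact h x hx y hy

lemma isClosed_setOf_sphDiam_le (hD : 0 ≤ D) :
    IsClosed {K : Compacts (Sph n) | sphDiam (K : Set (Sph n)) ≤ D} := by
  have hclosed : IsClosed {p : Sph n × Sph n | gd p.1 p.2 ≤ D} :=
    isClosed_le continuous_gd continuous_const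
  simpa only [Set.prod_subset_iff, Set.mem_ofPred_eq, ← sphDiam_le_iff hD] using
    isClosed_setOf_compacts_prod_self_subset hclosed

end GeodesicDiameter

theorem exists_DMaximal_general (n : ℕ) {D : ℝ} (hD : 0 ≤ D) :
    ∃ C : Set (Sph n), DMaximal n D C := by
  have hempty : sphDiam ((⊥ : Compacts (Sph n)) : Set (Sph n)) ≤ D :=
    (sphDiam_le_iff hD).2 (by simp)
  obtain ⟨C, hCD, hmax⟩ := exists_isMaxOn_measure_compacts (sphVol n) ⟨⊥, hempty⟩
    (isClosed_setOf_sphDiam_le hD)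
  refine ⟨C, C.isCompact, hCD, le_antisymm (le_sSup ⟨C, C.isCompact, hCD, rfl⟩) (sSup_le ?_)⟩
  rintro v ⟨X, hX, hXD, rfl⟩
  exact hmax (a := ⟨X, hX⟩) hXD

/-- existence of `D`-maximal sets (the supremum of volumes is attained). -/
theorem exists_DMaximal (n : ℕ) (hn : 2 ≤ n) (D : ℝ) (hD0 : 0 < D) (hD1 : D < Real.pi) :
    ∃ C : Set (Sph n), DMaximal n D C :=
  exists_DMaximal_general n hD0.le
end
end

section
/- Let n ≥ 2 and let X ⊆ S^n be a nonempty set with geodesic diameter diam X < arccos(−1/(n+1)). Then X is contained in an open hemisphere: there exists z ∈ ℝ^{n+1}, z ≠ 0, such that ⟨x,z⟩ > 0 for all x ∈ X. -/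
/-!
Let `c` be the cosine of the diameter, so that `-1/d < c`, where `d = n + 1`, and `c ≤ ⟪x, y⟫`
for all `x`, `y` in the set. By Carathéodory's theorem a point of the convex hull is a convex
combination `∑ wᵢ xᵢ` of at most `d + 1` of them, and
`‖∑ wᵢ xᵢ‖² ≥ c + (1 - c) ∑ wᵢ² ≥ c + (1 - c)/(d + 1) = (1 + d c)/(d + 1) > 0`.
Hence the origin is outside the closure of the convex hull, and the normal of a hyperplane that
separates the two is the pole of an open hemisphere. The regular simplex, with `c = -1/d` and its
centre at the origin, is the extremal case.
-/

open MeasureTheory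

noncomputable section

open InnerProductGeometry Module
open NormedSpace (norm_normalize_eq_one_iff norm_smul_normalize)
open scoped RealInnerProductSpace

lemma lt_cos_of_lt_arccos {x θ : ℝ} (hθ : 0 ≤ θ) (h : θ < Real.arccos x) : x < Real.cos θ := by
  rw [← Real.arccos_cos hθ (h.le.trans (Real.arccos_le_pi x))] at h
  exact Real.antitone_arccos.reflect_lt h

lemma one_div_card_le_sum_sq {ι 𝕜 : Type*} [Fintype ι] [Field 𝕜] [LinearOrder 𝕜]
    [IsStrictOrderedRing 𝕜] {w : ι → 𝕜} (hw_sum : ∑ i, w i = 1) :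
    1 / (Fintype.card ι : 𝕜) ≤ ∑ i, w i ^ 2 := by
  have hcs := sq_sum_le_card_mul_sum_sq (s := Finset.univ) (f := w)
  rw [hw_sum, one_pow, Finset.card_univ] at hcs
  exact div_le_of_le_mul₀ (Nat.cast_nonneg _) (by positivity) (by rwa [mul_comm])

section InnerProductSpace

variable {E : Type*} [NormedAddCommGroup E] [InnerProductSpace ℝ E]

lemma add_mul_sum_sq_le_norm_sum_smul_sq {ι : Type*} [Fintype ι] {w : ι → ℝ} {p : ι → E} {c : ℝ}
    (hw : ∀ i, 0 ≤ w i) (hw_sum : ∑ i, w i = 1) (hp : ∀ i, ‖p i‖ = 1)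
    (hc : ∀ i j, c ≤ ⟪p i, p j⟫) :
    c + (1 - c) * ∑ i, w i ^ 2 ≤ ‖∑ i, w i • p i‖ ^ 2 := by
  -- Every term of the double sum in `hcross` is nonnegative, so its diagonal is a lower bound.
  have hdiag : ∀ i, w i ^ 2 * (1 - c) ≤ ∑ j, w i * w j * (⟪p i, p j⟫ - c) := fun i => by
    have hterm := Finset.single_le_sum (f := fun j => w i * w j * (⟪p i, p j⟫ - c))
      (fun j _ => mul_nonneg (mul_nonneg (hw i) (hw j)) (sub_nonneg.2 (hc i j)))
      (Finset.mem_univ i)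
    simpa only [← sq, real_inner_self_eq_norm_sq, hp, one_pow] using hterm
  have hcross : ∑ i, ∑ j, w i * w j * (⟪p i, p j⟫ - c) = ‖∑ i, w i • p i‖ ^ 2 - c := by
    have hww : ∑ i, ∑ j, w i * w j = 1 := by
      rw [← Finset.sum_mul_sum, hw_sum, one_mul]
    have hnorm : ‖∑ i, w i • p i‖ ^ 2 = ∑ i, ∑ j, w i * w j * ⟪p i, p j⟫ := by
      simp only [← real_inner_self_eq_norm_sq, sum_inner, inner_sum, real_inner_smul_right,
        real_inner_comm, mul_assoc, mul_left_comm]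
    simp only [hnorm, mul_sub, Finset.sum_sub_distrib, ← Finset.sum_mul, hww, one_mul]
  have hsum := Finset.sum_le_sum fun i (_ : i ∈ Finset.univ) => hdiag i
  rw [hcross, ← Finset.sum_mul] at hsum
  linarith

lemma inner_normalize_normalize (x y : E) :
    ⟪NormedSpace.normalize x, NormedSpace.normalize y⟫ = Real.cos (angle x y) := by
  rw [cos_angle, NormedSpace.normalize, NormedSpace.normalize, real_inner_smul_left,
    real_inner_smul_right]
  ring

lemma exists_forall_inner_pos_of_zero_notMem_closure_convexHull [CompleteSpace E] {K : Set E}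
    (hK : (0 : E) ∉ closure (convexHull ℝ K)) : ∃ z : E, ∀ x ∈ K, 0 < ⟪x, z⟫ := by
  obtain ⟨f, u, hu, hf⟩ := geometric_hahn_banach_point_closed (convex_convexHull ℝ K).closure
    isClosed_closure hK
  rw [map_zero] at hu
  refine ⟨(InnerProductSpace.toDual ℝ E).symm f, fun x hx => ?_⟩
  rw [real_inner_comm, InnerProductSpace.toDual_symm_apply]
  exact hu.trans (hf x (subset_closure (subset_convexHull ℝ K hx)))

variable [FiniteDimensional ℝ E]

lemma div_le_norm_sq_of_mem_convexHull {K : Set E} {c : ℝ} (hK : ∀ x ∈ K, ‖x‖ = 1)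
    (hc : ∀ x ∈ K, ∀ y ∈ K, c ≤ ⟪x, y⟫) {v : E} (hv : v ∈ convexHull ℝ K) :
    (1 + finrank ℝ E * c) / (finrank ℝ E + 1) ≤ ‖v‖ ^ 2 := by
  obtain ⟨ι, _, p, w, hpK, hp_indep, hw_pos, hw_sum, rfl⟩ := eq_pos_convex_span_of_mem_convexHull hv
  have hp : ∀ i, p i ∈ K := fun i => hpK ⟨i, rfl⟩
  have hι : Nonempty ι := Finset.univ_nonempty_iff.1 <|
    Finset.nonempty_of_sum_ne_zero (hw_sum.trans_ne one_ne_zero)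
  have hcard : (Fintype.card ι : ℝ) ≤ finrank ℝ E + 1 := mod_cast
    hp_indep.card_le_finrank_succ.trans (Nat.succ_le_succ (Submodule.finrank_le _))
  have hsq : 1 / ((finrank ℝ E : ℝ) + 1) ≤ ∑ i, w i ^ 2 :=
    (one_div_le_one_div_of_le (mod_cast Fintype.card_pos) hcard).trans
      (one_div_card_le_sum_sq hw_sum)
  have hc_gap : 0 ≤ 1 - c := by
    obtain ⟨i⟩ := hι
    simpa [hK _ (hp i)] using hc _ (hp i) _ (hp i)
  calc (1 + finrank ℝ E * c) / (finrank ℝ E + 1)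
      = c + (1 - c) * (1 / ((finrank ℝ E : ℝ) + 1)) := by field_simp; ring
    _ ≤ c + (1 - c) * ∑ i, w i ^ 2 := by gcongr
    _ ≤ ‖∑ i, w i • p i‖ ^ 2 := add_mul_sum_sq_le_norm_sum_smul_sq (fun i => (hw_pos i).le) hw_sum
        (fun i => hK _ (hp i)) fun i j => hc _ (hp i) _ (hp j)

lemma zero_notMem_closure_convexHull_of_le_inner {K : Set E} {c : ℝ} (hK : ∀ x ∈ K, ‖x‖ = 1)
    (hc : ∀ x ∈ K, ∀ y ∈ K, c ≤ ⟪x, y⟫) (hc_pos : 0 < 1 + finrank ℝ E * c) :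
    (0 : E) ∉ closure (convexHull ℝ K) := fun h0 => by
  have hclosed : IsClosed {v : E | (1 + finrank ℝ E * c) / (finrank ℝ E + 1) ≤ ‖v‖ ^ 2} :=
    isClosed_le continuous_const (by fun_prop)
  have hle : (1 + finrank ℝ E * c) / (finrank ℝ E + 1) ≤ ‖(0 : E)‖ ^ 2 :=
    closure_minimal (fun v => div_le_norm_sq_of_mem_convexHull hK hc) hclosed h0
  have hpos : 0 < (1 + finrank ℝ E * c) / (finrank ℝ E + 1) := by positivity
  exact hpos.not_ge (by simpa using hle)

theorem small_diameter_in_open_hemisphere_general {X : Set E} (hne : X.Nonempty)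
    (hX : (0 : E) ∉ X) {θ : ℝ} (hangle : ∀ x ∈ X, ∀ y ∈ X, angle x y ≤ θ)
    (hθ : θ < Real.arccos (-1 / finrank ℝ E)) :
    ∃ z : E, z ≠ 0 ∧ ∀ x ∈ X, 0 < ⟪x, z⟫ := by
  obtain ⟨x₀, hx₀⟩ := hne
  have hne_zero : ∀ x ∈ X, x ≠ 0 := fun x hx => ne_of_mem_of_not_mem hx hX
  have hθ_nonneg : 0 ≤ θ := (angle_nonneg x₀ x₀).trans (hangle x₀ hx₀ x₀ hx₀)
  have hθ_le : θ ≤ Real.pi := hθ.le.trans (Real.arccos_le_pi _)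
  have hcos_le : ∀ x ∈ X, ∀ y ∈ X, Real.cos θ ≤ Real.cos (angle x y) := fun x hx y hy =>
    Real.cos_le_cos_of_nonneg_of_le_pi (angle_nonneg x y) hθ_le (hangle x hx y hy)
  have hcos_gap : 0 < 1 + finrank ℝ E * Real.cos θ := by
    have : Nontrivial E := ⟨x₀, 0, hne_zero x₀ hx₀⟩
    have hd : (0 : ℝ) < finrank ℝ E := mod_cast finrank_pos
    linarith [(div_lt_iff₀' hd).1 (lt_cos_of_lt_arccos hθ_nonneg hθ)]
  obtain ⟨z, hz⟩ := exists_forall_inner_pos_of_zero_notMem_closure_convexHull <|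
    zero_notMem_closure_convexHull_of_le_inner (K := NormedSpace.normalize '' X)
      (Set.forall_mem_image.2 fun x hx => norm_normalize_eq_one_iff.2 (hne_zero x hx))
      (Set.forall_mem_image.2 fun x hx => Set.forall_mem_image.2 fun y hy =>
        (hcos_le x hx y hy).trans_eq (inner_normalize_normalize x y).symm)
      hcos_gap
  have hpos : ∀ x ∈ X, 0 < ⟪x, z⟫ := fun x hx => by
    have hz_normalize := hz _ (Set.mem_image_of_mem _ hx)
    rw [← norm_smul_normalize x, real_inner_smul_left]
    exact mul_pos (norm_pos_iff.2 (hne_zero x hx)) hz_normalize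
  refine ⟨z, fun hz_zero => ?_, hpos⟩
  simpa [hz_zero] using hpos x₀ hx₀

end InnerProductSpace

lemma angle_le_sphDiam {n : ℕ} {X : Set (Sph n)} {x y : Sph n} (hx : x ∈ X) (hy : y ∈ X) :
    angle (x : Esp n) y ≤ sphDiam X := by
  have hbdd : BddAbove {r | ∃ x ∈ X, ∃ y ∈ X, r = gd x y} :=
    ⟨Real.pi, by rintro _ ⟨_, _, _, _, rfl⟩; exact Real.arccos_le_pi _⟩
  have hgd : gd x y = angle (x : Esp n) y := by simp [gd, angle]
  exact hgd ▸ le_csSup hbdd ⟨x, hx, y, hy, rfl⟩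

/-- a set of geodesic diameter less than `arccos(−1/(n+1))` is contained
in an open hemisphere. -/
theorem small_diameter_in_open_hemisphere (n : ℕ) (hn : 2 ≤ n) (X : Set (Sph n))
    (hne : X.Nonempty) (hdiam : sphDiam X < Real.arccos (-1 / ((n : ℝ) + 1))) :
    ∃ z : Esp n, z ≠ 0 ∧ ∀ x ∈ X, 0 < inner (𝕜 := ℝ) (x : Esp n) z := by
  simpa using small_diameter_in_open_hemisphere_general (hne.image ((↑) : Sph n → Esp n))
    (by rintro ⟨x, -, hx⟩; exact ne_zero_of_mem_unit_sphere x hx)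
    (Set.forall_mem_image.2 fun _ hx => Set.forall_mem_image.2 fun _ hy => angle_le_sphDiam hx hy)
    (by simpa using hdiam)
end
end
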